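/- arXiv:0810.2497 — 3 statements merged into one kernel-verified Lean document; each statement's English description precedes it below -/
import Mathlib

section
/- Let H be an infinite-dimensional separable complex Hilbert space, T a bounded linear operator on H, and p(t) = (t−t₁)⋯(t−tₙ) a polynomial with distinct real roots t₁,…,tₙ. If p(T) is a compact operator, then there exists a compact operator K on H such that p(T+K) = 0 and ‖T+K‖ = ‖T‖_e, where ‖T‖_e denotes the essential norm of T, i.e. the norm of the image of T in the Calkin algebra B(H)/K(H). -/
/-!
Write `p` for the product of the linear factors and `c` for the essential norm of `T`.

*Reduction to a minimal polynomial.* Among the sets of roots whose polynomial `q` makes `q(T)`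
compact, take a minimal one `s`. Each root `r ∈ s` then satisfies `|r| ≤ c`: otherwise some compact
perturbation of `T - r` is invertible and the factor `t - r` could be dropped (`abs_root_le`).

*An exact algebraic lift.* The Lagrange polynomials of `T` are idempotents modulo compacts. A
similarity makes `T` self-adjoint modulo compacts; a self-adjoint operator `A` with `q(A)` compact
has countable spectrum off `s`, so a locally constant function of `A` with values in `s` is a compact
perturbation of `A` (`selfAdjoint_model`). Undoing the similarity yields `T₀` with `T₀ - T` compact
and `q(T₀) = 0` (`exists_algebraic_model`).

*Triangular form.* The kernels of the partial products of `q(T₀)` form a flag, so `T₀` is upper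
triangular with scalar diagonal blocks `r` for a finite orthogonal resolution of the identity `Q r`
(`exists_isTriangular`). Conversely every operator of this shape is annihilated by `q`
(`IsTriangular.aeval_eq_zero`), so any off-diagonal modification is harmless.

*Correcting the norm.* The essential norm is attained: `T₀ = S + K₀` with `K₀` compact and
`‖S‖ ≤ c` (`best_approx`). Blocks with `|r| = c` already have maximal norm, hence their
off-diagonal entries are compact (`cpt_sub_mul_proj`) and can be deleted. On the remaining blocks,
where `|r| ≤ c - δ`, the strictly triangular part `N` is replaced by `A N A`, where `A` is close to
`1` modulo compacts, commutes with every `Q r`, and satisfies `A² (δ + E) = δ` for a compact `E ≥ 0`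
that commutes with every `Q r` and dominates the form of `K₀` on these blocks. Comparing sesquilinear
forms, the slack `δ` of the diagonal pays exactly for the contribution of `E`, so the resulting
operator has norm at most `c` (`exists_norm_le`).
-/

set_option linter.unusedSectionVars false
namespace PolyCompact
variable {H : Type*} [NormedAddCommGroup H] [InnerProductSpace ℂ H] [CompleteSpace H]

/-! ### Compact operators -/

/-- The operator `A` is compact; a name for `IsCompactOperator` on bundled endomorphisms, so that
the ideal properties can be stated for the algebra operations of `H →L[ℂ] H`. -/
def Cpt (A : H →L[ℂ] H) : Prop := IsCompactOperator A

lemma Cpt.zero : Cpt (0 : H →L[ℂ] H) := isCompactOperator_zero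
lemma Cpt.add {A B : H →L[ℂ] H} (hA : Cpt A) (hB : Cpt B) : Cpt (A + B) :=
  IsCompactOperator.add hA hB
lemma Cpt.sub {A B : H →L[ℂ] H} (hA : Cpt A) (hB : Cpt B) : Cpt (A - B) :=
  IsCompactOperator.sub hA hB
lemma Cpt.neg {A : H →L[ℂ] H} (hA : Cpt A) : Cpt (-A) := IsCompactOperator.neg hA
lemma Cpt.smul {A : H →L[ℂ] H} (c : ℂ) (hA : Cpt A) : Cpt (c • A) := IsCompactOperator.smul hA c
lemma Cpt.mul_left {A : H →L[ℂ] H} (B : H →L[ℂ] H) (hA : Cpt A) : Cpt (B * A) :=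
  IsCompactOperator.clm_comp hA B
lemma Cpt.mul_right {A : H →L[ℂ] H} (hA : Cpt A) (B : H →L[ℂ] H) : Cpt (A * B) :=
  IsCompactOperator.comp_clm hA B
lemma Cpt.sum {ι : Type*} {s : Finset ι} {A : ι → H →L[ℂ] H} (h : ∀ i ∈ s, Cpt (A i)) :
    Cpt (∑ i ∈ s, A i) :=
  Finset.sum_induction _ Cpt (fun _ _ => Cpt.add) Cpt.zero h

lemma Cpt.isClosed : IsClosed {A : H →L[ℂ] H | Cpt A} := isClosed_setOfPred_isCompactOperator

lemma Cpt.of_approx {A : H →L[ℂ] H} (h : ∀ ε > 0, ∃ B : H →L[ℂ] H, Cpt B ∧ ‖A - B‖ ≤ ε) :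
    Cpt A := by
  have : A ∈ closure {A : H →L[ℂ] H | Cpt A} := by
    rw [Metric.mem_closure_iff]
    intro ε hε
    obtain ⟨B, hB, hAB⟩ := h (ε / 2) (by linarith)
    exact ⟨B, hB, by rw [dist_eq_norm]; linarith⟩
  rwa [Cpt.isClosed.closure_eq] at this

/-- A compactness criterion: a finite net for the image of the ball under `Z` pulls back to a
finite net for its image under `P`. -/
lemma Cpt.of_sq_le {Z P : H →L[ℂ] H} (hZ : Cpt Z) (h : ∀ x, ‖P x‖ ^ 2 ≤ ‖Z x‖ * ‖x‖) :
    Cpt P := by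
  have hZ' := IsCompactOperator.isCompact_closure_image_closedBall (𝕜₁ := ℂ) (f := (Z : H →ₗ[ℂ] H)) hZ 1
  have hZt := hZ'.totallyBounded.subset subset_closure
  refine (isCompactOperator_iff_isCompact_closure_image_closedBall (𝕜₁ := ℂ)
    (P : H →ₗ[ℂ] H) one_pos).2 ?_
  refine TotallyBounded.isCompact_of_isClosed (TotallyBounded.closure ?_) isClosed_closure
  rw [Metric.totallyBounded_iff]
  intro ε hε
  obtain ⟨t, hts, htf, hcov⟩ := Metric.finite_approx_of_totallyBounded hZt (ε ^ 2 / 2) (by positivity)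
  have hts' : ∀ y, ∃ x, y ∈ t → x ∈ Metric.closedBall (0 : H) 1 ∧ Z x = y := fun y => by
    by_cases hy : y ∈ t
    · obtain ⟨x, hx⟩ := hts hy
      exact ⟨x, fun _ => hx⟩
    · exact ⟨0, fun h => absurd h hy⟩
  choose g hg using hts'
  refine ⟨Set.image (fun y => P (g y)) t, htf.image _, ?_⟩
  rintro _ ⟨x, hx, rfl⟩
  obtain ⟨y, hy, hxy⟩ := Set.mem_iUnion₂.1 (hcov ⟨x, hx, rfl⟩)
  refine Set.mem_iUnion₂.2 ⟨_, ⟨y, hy, rfl⟩, ?_⟩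
  obtain ⟨hg1, hg2⟩ := hg y hy
  rw [mem_closedBall_zero_iff] at hx hg1
  rw [← hg2, Metric.mem_ball, dist_eq_norm] at hxy
  rw [Metric.mem_ball, dist_eq_norm]
  have h1 := h (x - g y)
  rw [map_sub, map_sub] at h1
  have h2 : ‖x - g y‖ ≤ 2 := (norm_sub_le _ _).trans (by linarith)
  change ‖Z x - Z (g y)‖ < _ at hxy
  change ‖P x - P (g y)‖ < _
  refine lt_of_pow_lt_pow_left₀ 2 hε.le (h1.trans_lt ?_)
  nlinarith [norm_nonneg (Z x - Z (g y)), norm_nonneg (x - g y)]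

lemma Cpt.of_norm_le {Z P : H →L[ℂ] H} (hZ : Cpt Z) (C : ℝ) (h : ∀ x, ‖P x‖ ≤ C * ‖Z x‖) :
    Cpt P := by
  refine Cpt.of_sq_le (Z := ((C * ‖P‖ : ℝ) : ℂ) • Z) (hZ.smul _) fun x => ?_
  have h1 := P.le_opNorm x
  have h2 := h x
  rw [smul_apply, norm_smul, Complex.norm_real, Real.norm_eq_abs]
  have h3 : C * ‖P‖ ≤ |C * ‖P‖| := le_abs_self _
  have h4 : 0 ≤ ‖Z x‖ * ‖x‖ := by positivity
  calc ‖P x‖ ^ 2 = ‖P x‖ * ‖P x‖ := sq _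
    _ ≤ (‖P‖ * ‖x‖) * (C * ‖Z x‖) := mul_le_mul h1 h2 (norm_nonneg _) (by positivity)
    _ = (C * ‖P‖) * (‖Z x‖ * ‖x‖) := by ring
    _ ≤ |C * ‖P‖| * (‖Z x‖ * ‖x‖) := mul_le_mul_of_nonneg_right h3 h4
    _ = _ := by ring

lemma Cpt.adj {A : H →L[ℂ] H} (hA : Cpt A) : Cpt (star A) := by
  refine Cpt.of_sq_le (Z := A * star A) (hA.mul_right _) fun x => ?_
  have : ‖(star A) x‖ ^ 2 = RCLike.re (inner ℂ ((A * star A) x) x) := by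
    rw [mul_apply_eq_comp, ← ContinuousLinearMap.adjoint_inner_right,
      ← ContinuousLinearMap.star_eq_adjoint, inner_self_eq_norm_sq]
  rw [this]
  exact (RCLike.re_le_norm _).trans (norm_inner_le_norm _ _)

open Polynomial in
lemma Cpt.aeval_sub {A B : H →L[ℂ] H} (h : Cpt (A - B)) (p : ℂ[X]) :
    Cpt (aeval A p - aeval B p) := by
  induction p using Polynomial.induction_on' with
  | add p q hp hq =>
    have := hp.add hq
    rw [map_add, map_add]; convert this using 1; abel
  | monomial n a =>
    simp only [aeval_monomial, ← mul_sub]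
    refine Cpt.mul_left _ ?_
    induction n with
    | zero => simpa using Cpt.zero
    | succ n ih =>
      have := (ih.mul_right A).add (h.mul_left (B ^ n))
      convert this using 1
      rw [pow_succ, pow_succ]; noncomm_ring

/-! ### Quadratic forms -/

/-- The real quadratic form `Re ⟪A u, u⟫` of an operator. -/
noncomputable def qf (A : H →L[ℂ] H) (u : H) : ℝ := RCLike.re (inner ℂ (A u) u)

lemma qf_mono {A B : H →L[ℂ] H} (h : A ≤ B) (u : H) : qf A u ≤ qf B u := by
  have := ((ContinuousLinearMap.le_def A B).1 h).re_inner_nonneg_left u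
  rw [sub_apply, inner_sub_left, map_sub] at this
  unfold qf; linarith

lemma qf_nonneg {A : H →L[ℂ] H} (h : 0 ≤ A) (u : H) : 0 ≤ qf A u := by
  have := qf_mono h u
  simpa [qf] using this

lemma qf_star_mul (A : H →L[ℂ] H) (B : H →L[ℂ] H) (u : H) : qf (star A * B * A) u = qf B (A u) := by
  simp only [qf, mul_apply_eq_comp, ContinuousLinearMap.star_eq_adjoint,
    ContinuousLinearMap.adjoint_inner_left]

lemma qf_one (u : H) : qf (1 : H →L[ℂ] H) u = ‖u‖ ^ 2 := by
  simp only [qf, one_apply_eq_self, inner_self_eq_norm_sq]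

lemma qf_star_mul_self (A : H →L[ℂ] H) (u : H) : qf (star A * A) u = ‖A u‖ ^ 2 := by
  rw [← qf_one, ← qf_star_mul, mul_one]

lemma qf_add (A B : H →L[ℂ] H) (u : H) : qf (A + B) u = qf A u + qf B u := by
  simp [qf]

lemma qf_smul (r : ℝ) (A : H →L[ℂ] H) (u : H) : qf (r • A) u = r * qf A u := by
  simp [qf, inner_smul_left_eq_smul]

lemma qf_sum {ι : Type*} (s : Finset ι) (A : ι → H →L[ℂ] H) (u : H) :
    qf (∑ i ∈ s, A i) u = ∑ i ∈ s, qf (A i) u := by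
  simp [qf]

lemma star_mul_cfc (T : H →L[ℂ] H) {k : ℝ → ℝ} (hk : Continuous k) :
    star (T * cfc k (star T * T)) * (T * cfc k (star T * T)) =
      cfc (fun x => k x * x * k x) (star T * T) := by
  have hsa : IsSelfAdjoint (star T * T) := IsSelfAdjoint.star_mul_self T
  have hkN : ContinuousOn k (spectrum ℝ (star T * T)) := hk.continuousOn
  have h1 : ContinuousOn (fun x => k x * x) (spectrum ℝ (star T * T)) :=
    hkN.mul continuousOn_id
  rw [star_mul, (IsSelfAdjoint.cfc (f := k) (a := star T * T)).star_eq,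
    cfc_mul _ _ _ h1 hkN, cfc_mul k (fun x => x) _ hkN continuousOn_id, cfc_id' ℝ _ hsa]
  simp only [mul_assoc]

/-! ### Attaining the essential norm -/

set_option maxHeartbeats 1000000 in
/-- The distance to the compact operators is attained. The minimiser is obtained by cutting off the
positive part in the polar decomposition of `T` at level `c`: with `N = T* T` it is
`c • T k(N)`, `k(x) = 1 / max (√x) c`. -/
lemma best_approx {T : H →L[ℂ] H} {c : ℝ} (hc : 0 ≤ c)
    (h : ∀ ε > 0, ∃ K : H →L[ℂ] H, Cpt K ∧ ‖T - K‖ ≤ c + ε) :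
    ∃ S : H →L[ℂ] H, Cpt (T - S) ∧ ‖S‖ ≤ c := by
  rcases hc.eq_or_lt with rfl | hc
  · refine ⟨0, ?_, by simp⟩
    rw [sub_zero]
    exact Cpt.of_approx fun ε hε => by simpa using h ε hε
  set N := star T * T with hN
  have hNsa : IsSelfAdjoint N := IsSelfAdjoint.star_mul_self T
  have hNpos : ∀ x ∈ spectrum ℝ N, 0 ≤ x := fun x hx =>
    spectrum_nonneg_of_nonneg (star_mul_self_nonneg T) hx
  obtain ⟨k, hk⟩ : ∃ k : ℝ → ℝ, k = fun x => (max (√x) c)⁻¹ := ⟨_, rfl⟩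
  have hmax : ∀ x : ℝ, max (√x) c ≠ 0 := fun x => (lt_max_of_lt_right hc).ne'
  have hkc : Continuous k := hk ▸ Continuous.inv₀ (by fun_prop) hmax
  have hTk : ‖T * cfc k N‖ ≤ 1 := by
    have h1 : star (T * cfc k N) * (T * cfc k N) = cfc (fun x => k x * x * k x) N :=
      star_mul_cfc T hkc
    have h2 : ‖star (T * cfc k N) * (T * cfc k N)‖ ≤ 1 := by
      rw [h1]
      refine norm_cfc_le zero_le_one fun x hx => ?_
      have hx0 := hNpos x hx
      have hm : 0 < max (√x) c := lt_max_of_lt_right hc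
      have : k x * x * k x = (√x / max (√x) c) ^ 2 := by
        simp only [hk]
        rw [div_pow, Real.sq_sqrt hx0]
        field_simp
      rw [this, Real.norm_eq_abs, abs_of_nonneg (by positivity)]
      exact pow_le_one₀ (by positivity) ((div_le_one hm).2 (le_max_left _ _))
    rw [CStarRing.norm_star_mul_self] at h2
    nlinarith [norm_nonneg (T * cfc k N)]
  refine ⟨c • (T * cfc k N), ?_, ?_⟩
  swap
  · rw [norm_smul, Real.norm_of_nonneg hc.le]
    nlinarith
  have h3 : T - c • (T * cfc k N) = T * cfc (fun x => 1 - c * k x) N := by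
    rw [cfc_sub _ _ N continuousOn_const (hkc.const_mul c).continuousOn, cfc_const_one ℝ N,
      cfc_const_mul c k N hkc.continuousOn, mul_sub, mul_one, mul_smul_comm]
  rw [h3]
  refine Cpt.mul_left _ (Cpt.of_approx fun δ hδ => ?_)
  -- `g(N)` lives on the part of the spectrum where `√x ≥ c (1 + δ)`; there `T` is bounded below by
  -- `c (1 + δ)` while `‖T - K‖ ≤ c (1 + δ / 2)`, so `K` is bounded below and `g(N)` is compact
  obtain ⟨g, hg⟩ : ∃ g : ℝ → ℝ, g = fun x => max (1 - c * k x - δ) 0 := ⟨_, rfl⟩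
  have hgc : Continuous g := by rw [hg]; fun_prop
  refine ⟨cfc g N, ?_, ?_⟩
  swap
  · rw [← cfc_sub (fun x => 1 - c * k x) g N (continuous_const.sub (hkc.const_mul c)).continuousOn hgc.continuousOn]
    refine norm_cfc_le hδ.le fun x hx => ?_
    have hk0 : 0 < k x := hk ▸ inv_pos.2 (lt_max_of_lt_right hc)
    have hk1 : c * k x ≤ 1 := by
      simp only [hk]
      rw [← div_eq_mul_inv]
      exact (div_le_one (lt_max_of_lt_right hc)).2 (le_max_right _ _)
    rw [Real.norm_eq_abs, abs_le]
    simp only [hg]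
    rcases max_cases (1 - c * k x - δ) 0 with ⟨h, _⟩ | ⟨h, _⟩ <;> rw [h] <;> constructor <;> linarith
  obtain ⟨K, hK, hTK⟩ := h (c * δ / 2) (by positivity)
  refine Cpt.of_norm_le (hK.mul_right (cfc g N)) (c * δ / 2)⁻¹ fun x => ?_
  have h4 : (c * (1 + δ)) ^ 2 • (star (cfc g N) * cfc g N) ≤ star (T * cfc g N) * (T * cfc g N) := by
    have e1 : star (T * cfc g N) * (T * cfc g N) = cfc (fun x => g x * x * g x) N :=
      star_mul_cfc T hgc
    have e2 : (c * (1 + δ)) ^ 2 • (star (cfc g N) * cfc g N) =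
        cfc (fun x => (c * (1 + δ)) ^ 2 * (g x * g x)) N := by
      rw [(IsSelfAdjoint.cfc (f := g) (a := N)).star_eq, cfc_const_mul _ (fun x => g x * g x) N (hgc.mul hgc).continuousOn,
        cfc_mul _ _ N hgc.continuousOn hgc.continuousOn]
    rw [e1, e2]
    refine cfc_mono (fun x hx => ?_) ((hgc.mul hgc).const_mul _).continuousOn
      ((hgc.mul continuous_id).mul hgc).continuousOn
    have hx0 := hNpos x hx
    rcases le_or_gt (1 - c * k x - δ) 0 with h5 | h5
    · simp [hg, max_eq_right h5]
    have hm : 0 < max (√x) c := lt_max_of_lt_right hc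
    have h6 : c * k x < 1 - δ := by linarith
    simp only [hk] at h6
    rw [← div_eq_mul_inv, div_lt_iff₀ hm] at h6
    have h7 : c < √x := by
      by_contra hcon
      rw [max_eq_right (not_lt.1 hcon)] at h6
      nlinarith
    rw [max_eq_left h7.le] at h6
    have h8 : c * (1 + δ) ≤ √x := by nlinarith [mul_nonneg (Real.sqrt_nonneg x) (sq_nonneg δ)]
    have h9 : (c * (1 + δ)) ^ 2 ≤ x := by
      rw [← Real.sq_sqrt hx0]
      exact pow_le_pow_left₀ (by positivity) h8 2
    nlinarith [mul_self_nonneg (g x)]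
  have h5 := qf_mono h4 x
  rw [qf_smul, qf_star_mul_self, qf_star_mul_self, ← mul_pow] at h5
  have h6 := (abs_le_of_sq_le_sq' h5 (norm_nonneg _)).2
  have h7 : ‖(T * cfc g N) x‖ ≤ (c + c * δ / 2) * ‖(cfc g N) x‖ + ‖(K * cfc g N) x‖ := by
    have : (T * cfc g N) x = (T - K) (cfc g N x) + (K * cfc g N) x := by
      simp [mul_apply_eq_comp]
    rw [this]
    refine (norm_add_le _ _).trans (add_le_add_left ?_ _)
    exact (ContinuousLinearMap.le_opNorm _ _).trans
      (mul_le_mul_of_nonneg_right hTK (norm_nonneg _))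
  rw [inv_mul_eq_div, le_div_iff₀ (by positivity)]
  nlinarith

/-- The form of a compact self-adjoint operator is dominated by that of its absolute value. -/
lemma exists_form_selfAdjoint {K : H →L[ℂ] H} (hK : Cpt K) (hsa : IsSelfAdjoint K) :
    ∃ E : H →L[ℂ] H, Cpt E ∧ 0 ≤ E ∧
      ∀ u v, 2 * RCLike.re (inner ℂ (K u) v) ≤ qf E u + qf E v := by
  set E := cfc (fun x : ℝ => |x|) K with hE
  have hEE : star E * E = star K * K := by
    rw [hE, (IsSelfAdjoint.cfc (f := fun x : ℝ => |x|) (a := K)).star_eq, ← cfc_mul _ _ K, hsa.star_eq]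
    simp only [abs_mul_abs_self]
    rw [cfc_mul _ _ K, cfc_id' ℝ K]
  have h1 : K ≤ E := by
    conv_lhs => rw [← cfc_id' ℝ K]
    exact cfc_mono fun x _ => le_abs_self x
  have h2 : -K ≤ E := by
    conv_lhs => rw [← cfc_id' ℝ K, ← cfc_neg]
    exact cfc_mono fun x _ => neg_le_abs x
  refine ⟨E, ?_, cfc_nonneg fun x _ => abs_nonneg x, fun u v => ?_⟩
  · refine Cpt.of_norm_le hK 1 fun x => ?_
    have := qf_star_mul_self E x
    rw [hEE, qf_star_mul_self] at this
    rw [one_mul]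
    exact (abs_le_of_sq_le_sq' this.ge (norm_nonneg _)).2
  have a1 := qf_mono h1 (u + v)
  have a2 := qf_mono h2 (u - v)
  have hsym : RCLike.re (inner ℂ (K v) u) = RCLike.re (inner ℂ (K u) v) := by
    conv_lhs => rw [← hsa.star_eq, ContinuousLinearMap.star_eq_adjoint, ContinuousLinearMap.adjoint_inner_left, ← inner_conj_symm, RCLike.conj_re]
  have e1 : qf E (u + v) + qf E (u - v) = 2 * (qf E u + qf E v) := by
    simp only [qf, map_add, map_sub, inner_add_left, inner_add_right, inner_sub_left, inner_sub_right]
    ring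
  have e2 : qf K (u + v) + qf (-K) (u - v) = 4 * RCLike.re (inner ℂ (K u) v) := by
    simp only [qf, neg_apply, map_add, map_sub, map_neg, inner_neg_left, inner_add_left, inner_add_right, inner_sub_left, inner_sub_right, hsym]
    ring
  linarith

/-- The form of a compact operator is dominated by a compact positive quadratic form. -/
lemma exists_form {K : H →L[ℂ] H} (hK : Cpt K) :
    ∃ E : H →L[ℂ] H, Cpt E ∧ 0 ≤ E ∧
      ∀ u v, 2 * RCLike.re (inner ℂ (K u) v) ≤ qf E u + qf E v := by
  obtain ⟨E₁, c₁, p₁, f₁⟩ := exists_form_selfAdjoint (K := (1 / 2 : ℂ) • (K + star K))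
    ((hK.add hK.adj).smul _) (by
      rw [isSelfAdjoint_iff, star_smul, star_add, star_star, add_comm]; simp)
  obtain ⟨E₂, c₂, p₂, f₂⟩ := exists_form_selfAdjoint (K := (Complex.I / 2 : ℂ) • (star K - K))
    ((hK.adj.sub hK).smul _) (by
      rw [isSelfAdjoint_iff, star_smul, star_sub, star_star, ← neg_sub (star K) K]
      rw [smul_neg, ← neg_smul]; simp [neg_div])
  refine ⟨E₁ + E₂, c₁.add c₂, add_nonneg p₁ p₂, fun u v => ?_⟩
  have h1 := f₁ u v
  -- `K = Re K + i Im K`; the factor `i` is absorbed in the first vector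
  have h2 := f₂ (Complex.I • u) v
  have h3 : qf E₂ (Complex.I • u) = qf E₂ u := by
    rw [qf, qf, map_smul, inner_smul_left, inner_smul_right]
    simp [← mul_assoc]
  have h4 : K u = ((1 / 2 : ℂ) • (K + star K)) u + ((Complex.I / 2 : ℂ) • (star K - K)) (Complex.I • u) := by
    simp only [smul_apply, add_apply, sub_apply, map_smul, smul_smul, smul_sub]
    rw [show Complex.I * (Complex.I / 2) = -(1 / 2) by rw [← mul_div_assoc, Complex.I_mul_I]; ring]
    module
  rw [h4, inner_add_left, map_add, qf_add, qf_add]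
  linarith

/-! ### The self-adjoint case -/

open Polynomial

/-- The monic polynomial with simple roots at the points of `s`. -/
noncomputable def rootPoly (s : Finset ℝ) : ℂ[X] := ∏ r ∈ s, (X - C (r : ℂ))

lemma aeval_rootPoly (A : H →L[ℂ] H) (s : Finset ℝ) :
    aeval A (rootPoly s) = aeval A (∏ r ∈ s, (X - C r) : ℝ[X]) := by
  rw [← aeval_map_algebraMap ℂ A (∏ r ∈ s, (X - C r) : ℝ[X]), Polynomial.map_prod]
  simp [rootPoly]

lemma norm_cfc_apply_le {A : H →L[ℂ] H} {f g : ℝ → ℝ} {c : ℝ} (hc : 0 ≤ c)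
    (hf : ContinuousOn f (spectrum ℝ A)) (hg : ContinuousOn g (spectrum ℝ A))
    (h : ∀ x ∈ spectrum ℝ A, |f x| ≤ c * |g x|) (u : H) :
    ‖cfc f A u‖ ≤ c * ‖cfc g A u‖ := by
  have h1 : star (cfc f A) * cfc f A ≤ c ^ 2 • (star (cfc g A) * cfc g A) := by
    rw [(IsSelfAdjoint.cfc (f := f) (a := A)).star_eq, (IsSelfAdjoint.cfc (f := g) (a := A)).star_eq,
      ← cfc_mul _ _ A hf hf, ← cfc_mul _ _ A hg hg,
      ← cfc_const_mul (c ^ 2) (fun x => g x * g x) A (hg.mul hg)]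
    refine cfc_mono (fun x hx => ?_) (hf.mul hf) (continuousOn_const.mul (hg.mul hg))
    have := pow_le_pow_left₀ (abs_nonneg _) (h x hx) 2
    rw [mul_pow, sq_abs, sq_abs] at this
    nlinarith
  have h2 := qf_mono h1 u
  rw [qf_smul, qf_star_mul_self, qf_star_mul_self, ← mul_pow] at h2
  exact (abs_le_of_sq_le_sq' h2 (by positivity)).2

/-- Unit eigenvectors for distinct eigenvalues are at distance `√2`, so the balls of radius `1/2`
around them are disjoint, and separability leaves room for countably many only. -/
lemma countable_eigenvalues [TopologicalSpace.SeparableSpace H] {M : H →L[ℂ] H}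
    (hM : IsSelfAdjoint M) :
    {μ : ℂ | Module.End.HasEigenvalue (M : H →ₗ[ℂ] H) μ}.Countable := by
  have hort := (ContinuousLinearMap.isSelfAdjoint_iff_isSymmetric.1 hM).orthogonalFamily_eigenspaces
  have hex : ∀ μ : ℂ, ∃ v : H, Module.End.HasEigenvalue (M : H →ₗ[ℂ] H) μ →
      v ∈ Module.End.eigenspace (M : H →ₗ[ℂ] H) μ ∧ ‖v‖ = 1 := fun μ => by
    by_cases hμ : Module.End.HasEigenvalue (M : H →ₗ[ℂ] H) μ
    · obtain ⟨v, hv, hv0⟩ := hμ.exists_hasEigenvector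
      refine ⟨((‖v‖⁻¹ : ℝ) : ℂ) • v, fun _ => ⟨Submodule.smul_mem _ _ hv, ?_⟩⟩
      rw [norm_smul, Complex.norm_real, norm_inv, norm_norm, inv_mul_cancel₀ (norm_ne_zero_iff.2 hv0)]
    · exact ⟨0, fun h => absurd h hμ⟩
  choose v hv using hex
  refine Set.PairwiseDisjoint.countable_of_isOpen (s := fun μ => Metric.ball (v μ) (1 / 2)) ?_
    (fun _ _ => Metric.isOpen_ball) (fun μ _ => ⟨v μ, Metric.mem_ball_self (by norm_num)⟩)
  intro μ hμ ν hν hne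
  refine Metric.ball_disjoint_ball ?_
  have h0 : inner ℂ (v μ) (v ν) = 0 :=
    hort hne ⟨v μ, (hv μ hμ).1⟩ ⟨v ν, (hv ν hν).1⟩
  have h1 : ‖v μ - v ν‖ ^ 2 = 2 := by
    rw [@norm_sub_sq ℂ, h0, (hv μ hμ).2, (hv ν hν).2]; norm_num
  rw [dist_eq_norm]
  nlinarith [norm_nonneg (v μ - v ν)]

/-- Off `s` the polynomial maps the spectrum of `A` to nonzero eigenvalues of a compact operator. -/
lemma countable_spectrum [TopologicalSpace.SeparableSpace H] {A : H →L[ℂ] H}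
    (hA : IsSelfAdjoint A) {s : Finset ℝ} (hs : s.Nonempty) (h : Cpt (aeval A (rootPoly s))) :
    {x ∈ spectrum ℝ A | x ∉ s}.Countable := by
  obtain ⟨q, hq⟩ : ∃ q : ℝ[X], q = ∏ r ∈ s, (X - C r) := ⟨_, rfl⟩
  have hev : ∀ x, q.eval x = ∏ r ∈ s, (x - r) := fun x => by simp [hq, eval_prod]
  obtain ⟨M, hMdef⟩ : ∃ M : H →L[ℂ] H, M = aeval A (rootPoly s) := ⟨_, rfl⟩
  have hM : M = cfc (fun x => q.eval x) A := by rw [hMdef, aeval_rootPoly, ← hq, cfc_polynomial q A]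
  rw [← hMdef] at h
  have hMsa : IsSelfAdjoint M := by
    rw [hM]; exact IsSelfAdjoint.cfc (f := fun x => q.eval x) (a := A)
  have hspec : spectrum ℝ M = Set.image (fun x => q.eval x) (spectrum ℝ A) := by
    rw [hM]; exact cfc_map_spectrum (fun x => q.eval x) A hA q.continuous.continuousOn
  clear hM hMdef
  have hc := countable_eigenvalues hMsa
  have key : {x ∈ spectrum ℝ A | x ∉ s} ⊆
      ⋃ μ ∈ {μ : ℂ | Module.End.HasEigenvalue (M : H →ₗ[ℂ] H) μ},
        {x : ℝ | q.eval x ≠ 0 ∧ ((q.eval x : ℝ) : ℂ) = μ} := by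
    rintro x ⟨hx, hxs⟩
    have hne : q.eval x ≠ 0 := by
      rw [hev, Finset.prod_ne_zero_iff]
      intro r hr h0
      exact hxs (by rwa [sub_eq_zero.1 h0])
    refine Set.mem_iUnion₂.2 ⟨((q.eval x : ℝ) : ℂ), ?_, hne, rfl⟩
    refine (IsCompactOperator.hasEigenvalue_iff_mem_spectrum h (by exact_mod_cast hne)).2 ?_
    have : q.eval x ∈ spectrum ℝ M := hspec ▸ ⟨x, hx, rfl⟩
    exact (spectrum.algebraMap_mem_iff ℂ).2 this
  refine Set.Countable.mono key (hc.biUnion fun μ _ => ?_)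
  by_cases hμ : ∃ x : ℝ, q.eval x ≠ 0 ∧ ((q.eval x : ℝ) : ℂ) = μ
  · obtain ⟨x, hx, rfl⟩ := hμ
    have hne : q - C (q.eval x) ≠ 0 := by
      intro h0
      obtain ⟨r, hr⟩ := hs
      have h1 : q.eval r = 0 := by
        rw [hev]; exact Finset.prod_eq_zero hr (sub_self r)
      have h2 := congrArg (eval r) h0
      rw [eval_sub, eval_C, h1, eval_zero] at h2
      exact hx (by linarith)
    refine Set.Countable.mono ?_ (q - C (q.eval x)).roots.toFinset.countable_toSet
    rintro y ⟨_, hy⟩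
    have hy' : q.eval y = q.eval x := by exact_mod_cast hy
    simp [hne, hy']
  · refine Set.Countable.mono (fun x hx => (hμ ⟨x, hx⟩).elim) Set.countable_empty

/-- The operator `D` is `f(A)`, where `f` sends the points within `ε` of a root `r` to `r` and all
others to a fixed root. Since the spectrum is countable off `s`, the radius `ε` can be chosen so that
`f` is continuous on the spectrum. -/
lemma selfAdjoint_model [TopologicalSpace.SeparableSpace H] {A : H →L[ℂ] H}
    (hA : IsSelfAdjoint A) {s : Finset ℝ} (hs : s.Nonempty) (h : Cpt (aeval A (rootPoly s))) :
    ∃ D : H →L[ℂ] H, Cpt (D - A) ∧ aeval D (rootPoly s) = 0 := by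
  classical
  have hcount := countable_spectrum hA hs h
  obtain ⟨r₀, hr₀⟩ := hs
  obtain ⟨η, hη, hsep⟩ : ∃ η > 0, ∀ r ∈ s, ∀ r' ∈ s, r ≠ r' → 2 * η < |r - r'| := by
    have h1 : ∀ᶠ η : ℝ in nhdsWithin 0 (Set.Ioi 0), ∀ p ∈ s.offDiag, 2 * η < |p.1 - p.2| := by
      rw [Filter.eventually_all_finset]
      intro p hp
      have : 0 < |p.1 - p.2| := abs_pos.2 (sub_ne_zero.2 (Finset.mem_offDiag.1 hp).2.2)
      refine nhdsWithin_le_nhds (Filter.Tendsto.eventually_lt_const this ?_)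
      have : Continuous fun η : ℝ => 2 * η := by fun_prop
      simpa using this.tendsto 0
    obtain ⟨η, h2, h3⟩ := (h1.and self_mem_nhdsWithin).exists
    exact ⟨η, h3, fun r hr r' hr' hne => h2 (r, r') (Finset.mem_offDiag.2 ⟨hr, hr', hne⟩)⟩
  have hbad : (⋃ r ∈ (s : Set ℝ), Set.image (fun x => |x - r|) {x ∈ spectrum ℝ A | x ∉ s}).Countable :=
    s.countable_toSet.biUnion fun r _ => hcount.image _
  obtain ⟨ε, hεbad, hε0, hεη⟩ := (hbad.dense_compl ℝ).exists_between hη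
  have hne : ∀ x ∈ spectrum ℝ A, ∀ r ∈ s, |x - r| ≠ ε := by
    intro x hx r hr heq
    by_cases hxs : x ∈ s
    · by_cases hxr : x = r
      · rw [hxr, sub_self, abs_zero] at heq; exact hε0.ne heq
      · have := hsep x hxs r hr hxr; linarith
    · exact hεbad (Set.mem_iUnion₂.2 ⟨r, hr, x, ⟨hx, hxs⟩, heq⟩)
  have huniq : ∀ x, ∀ r ∈ s, ∀ r' ∈ s, |x - r| < ε → |x - r'| ≤ ε → r' = r := by
    intro x r hr r' hr' h1 h2
    by_contra hcon
    have h3 := hsep r' hr' r hr hcon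
    have h4 := abs_sub_le r' x r
    rw [abs_sub_comm r' x] at h4
    linarith
  obtain ⟨f, hf1, hf2⟩ : ∃ f : ℝ → ℝ, (∀ x, ∀ r ∈ s, |x - r| < ε → f x = r) ∧
      ∀ x, (∀ r ∈ s, ε ≤ |x - r|) → f x = r₀ := by
    refine ⟨fun x => if hx : ∃ r ∈ s, |x - r| < ε then hx.choose else r₀, ?_, ?_⟩
    · intro x r hr hxr
      have hx : ∃ r ∈ s, |x - r| < ε := ⟨r, hr, hxr⟩
      simp only [dif_pos hx]
      exact huniq x r hr _ hx.choose_spec.1 hxr hx.choose_spec.2.le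
    · intro x hx
      refine dif_neg ?_
      rintro ⟨r, hr, hxr⟩
      exact absurd (hx r hr) (not_le.2 hxr)
  have hfs : ∀ x, f x ∈ s := fun x => by
    by_cases hx : ∃ r ∈ s, |x - r| < ε
    · obtain ⟨r, hr, hxr⟩ := hx
      rwa [hf1 x r hr hxr]
    · push Not at hx
      rwa [hf2 x hx]
  have hfc : ContinuousOn f (spectrum ℝ A) := by
    intro x hx
    refine ContinuousAt.continuousWithinAt ?_
    by_cases hxr : ∃ r ∈ s, |x - r| < ε
    · obtain ⟨r, hr, hxr⟩ := hxr
      have hev : ∀ᶠ y in nhds x, |y - r| < ε :=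
        (isOpen_lt (by fun_prop) continuous_const).mem_nhds hxr
      refine (continuousAt_const (y := r)).congr ?_
      filter_upwards [hev] with y hy using (hf1 y r hr hy).symm
    · push Not at hxr
      have hev : ∀ᶠ y in nhds x, ∀ r ∈ s, ε < |y - r| := by
        rw [Filter.eventually_all_finset]
        intro r hr
        exact (isOpen_lt continuous_const (by fun_prop)).mem_nhds
          (lt_of_le_of_ne (hxr r hr) (hne x hx r hr).symm)
      refine (continuousAt_const (y := r₀)).congr ?_
      filter_upwards [hev] with y hy using (hf2 y fun r hr => (hy r hr).le).symm
  set q : ℝ[X] := ∏ r ∈ s, (X - C r) with hq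
  have hqev : ∀ x, q.eval x = ∏ r ∈ s, (x - r) := fun x => by simp [hq, eval_prod]
  have hM : aeval A (rootPoly s) = cfc q.eval A := by rw [aeval_rootPoly, cfc_polynomial q A]
  refine ⟨cfc f A, ?_, ?_⟩
  swap
  · rw [aeval_rootPoly, ← cfc_map_polynomial _ f A hA hfc]
    have : ∀ x, q.eval (f x) = 0 := fun x => by
      rw [hqev]; exact Finset.prod_eq_zero (hfs x) (sub_self _)
    simp only [← hq, this]
    exact cfc_const_zero ℝ A
  -- compactness of `f(A) - A` follows from `|f x - x| ≤ const * |q x|` on the spectrum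
  obtain ⟨R, hR⟩ := (ContinuousFunctionalCalculus.isCompact_spectrum (R := ℝ) A).isBounded.exists_norm_le
  have hR0 : 0 ≤ |r₀| + |R| := by positivity
  set c₁ : ℝ := (ε ^ (s.card - 1))⁻¹ with hc₁
  set c₂ : ℝ := (|r₀| + |R|) * (ε ^ s.card)⁻¹ with hc₂
  have hc₁0 : 0 < c₁ := by positivity
  have hc₂0 : 0 ≤ c₂ := by positivity
  have hDA : cfc f A - A = cfc (fun x => f x - x) A := by
    rw [cfc_sub f (fun x => x) A hfc continuousOn_id, cfc_id' ℝ A]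
  rw [hDA]
  rw [hM] at h
  refine Cpt.of_norm_le h (c₁ + c₂) fun u => norm_cfc_apply_le
    (f := fun x => f x - x) (g := fun x => q.eval x) (by positivity)
    (hfc.sub continuousOn_id) q.continuous.continuousOn (fun x hx => ?_) u
  rw [hqev, Finset.abs_prod]
  by_cases hxr : ∃ r ∈ s, |x - r| < ε
  · obtain ⟨r, hr, hxr⟩ := hxr
    rw [hf1 x r hr hxr, ← Finset.mul_prod_erase s _ hr, abs_sub_comm r x]
    have h1 : ε ^ (s.card - 1) ≤ ∏ r' ∈ s.erase r, |x - r'| := by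
      rw [← Finset.card_erase_of_mem hr]
      rw [← Finset.prod_const]
      refine Finset.prod_le_prod (fun _ _ => hε0.le) fun r' hr' => ?_
      by_contra hcon
      exact (Finset.mem_erase.1 hr').1
        (huniq x r hr r' (Finset.mem_erase.1 hr').2 hxr (not_le.1 hcon).le)
    have h2 : 1 ≤ c₁ * ∏ r' ∈ s.erase r, |x - r'| := by
      rw [hc₁, inv_mul_eq_div, le_div_iff₀ (by positivity), one_mul]; exact h1
    have h3 : 0 ≤ ∏ r' ∈ s.erase r, |x - r'| := Finset.prod_nonneg fun _ _ => abs_nonneg _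
    nlinarith [abs_nonneg (x - r), mul_nonneg (abs_nonneg (x - r)) (mul_nonneg hc₂0 h3),
      mul_le_mul_of_nonneg_left h2 (abs_nonneg (x - r))]
  · push Not at hxr
    rw [hf2 x hxr]
    have h1 : ε ^ s.card ≤ ∏ r' ∈ s, |x - r'| := by
      rw [← Finset.prod_const]
      exact Finset.prod_le_prod (fun _ _ => hε0.le) hxr
    have h2 : |r₀ - x| ≤ |r₀| + |R| :=
      (abs_sub _ _).trans (add_le_add_right ((hR x hx).trans (le_abs_self R)) _)
    have h3 : |r₀| + |R| ≤ c₂ * ∏ r' ∈ s, |x - r'| := by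
      rw [hc₂, mul_assoc]
      refine le_mul_of_one_le_right hR0 ?_
      rw [inv_mul_eq_div, le_div_iff₀ (by positivity), one_mul]; exact h1
    have h4 : 0 ≤ ∏ r' ∈ s, |x - r'| := Finset.prod_nonneg fun _ _ => abs_nonneg _
    nlinarith [mul_nonneg hc₁0.le h4]

/-! ### Lifting the algebraic relation -/

lemma aeval_conj {S R : H →L[ℂ] H} (hRS : R * S = 1) (hSR : S * R = 1) (T : H →L[ℂ] H)
    (p : ℂ[X]) : aeval (S * T * R) p = S * aeval T p * R := by
  have hpow : ∀ n : ℕ, (S * T * R) ^ n = S * T ^ n * R := fun n => by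
    induction n with
    | zero => simp [hSR]
    | succ n ih =>
      rw [pow_succ, ih, pow_succ]
      calc S * T ^ n * R * (S * T * R) = S * T ^ n * (R * S) * T * R := by noncomm_ring
        _ = _ := by rw [hRS]; noncomm_ring
  induction p using Polynomial.induction_on' with
  | add p q hp hq => rw [map_add, map_add, hp, hq]; noncomm_ring
  | monomial n a =>
    rw [aeval_monomial, aeval_monomial, hpow, Algebra.algebraMap_eq_smul_one]
    simp only [smul_mul_assoc, mul_smul_comm, one_mul]

/-- The Lagrange basis polynomials evaluated at `T`: a partition of the identity that diagonalises
`T` modulo compact operators. -/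
lemma exists_almost_idempotents {T : H →L[ℂ] H} {s : Finset ℝ} (hs : s.Nonempty)
    (h : Cpt (aeval T (rootPoly s))) :
    ∃ L : ℝ → H →L[ℂ] H, ∑ r ∈ s, L r = 1 ∧ ∀ r ∈ s, Cpt (L r * T - (r : ℂ) • L r) := by
  classical
  refine ⟨fun r => aeval T (Lagrange.basis s (fun r : ℝ => (r : ℂ)) r), ?_, fun r hr => ?_⟩
  · rw [← map_sum, Lagrange.sum_basis (fun a _ b _ hab => by exact_mod_cast hab) hs, map_one]
  · have h1 : Lagrange.basis s (fun r : ℝ => (r : ℂ)) r * X -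
        C (r : ℂ) * Lagrange.basis s (fun r : ℝ => (r : ℂ)) r =
        C (∏ j ∈ s.erase r, ((r : ℂ) - j)⁻¹) * rootPoly s := by
      rw [rootPoly, ← Finset.mul_prod_erase s _ hr, Lagrange.basis]
      simp only [Lagrange.basisDivisor, Finset.prod_mul_distrib, map_prod]
      ring
    have h2 := congrArg (aeval T) h1
    rw [map_sub, map_mul, map_mul, map_mul, aeval_X, aeval_C, aeval_C,
      Algebra.algebraMap_eq_smul_one, Algebra.algebraMap_eq_smul_one, smul_mul_assoc,
      smul_mul_assoc, one_mul, one_mul] at h2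
    rw [h2]
    exact h.smul _

lemma le_sum_star_mul_self {s : Finset ℝ} (hs : s.Nonempty) {L : ℝ → H →L[ℂ] H}
    (hL : ∑ r ∈ s, L r = 1) :
    algebraMap ℝ (H →L[ℂ] H) (s.card : ℝ)⁻¹ ≤ ∑ r ∈ s, star (L r) * L r := by
  have hcard : (0 : ℝ) < s.card := by exact_mod_cast hs.card_pos
  rw [ContinuousLinearMap.le_def, ContinuousLinearMap.isPositive_def']
  refine ⟨?_, fun x => ?_⟩
  · refine IsSelfAdjoint.sub ?_ (IsSelfAdjoint.algebraMap _ (IsSelfAdjoint.all _))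
    exact isSelfAdjoint_sum _ fun r _ => IsSelfAdjoint.star_mul_self _
  · have h1 : qf (∑ r ∈ s, star (L r) * L r) x = ∑ r ∈ s, ‖L r x‖ ^ 2 := by
      rw [qf_sum]; exact Finset.sum_congr rfl fun r _ => qf_star_mul_self _ _
    have h2 : qf (algebraMap ℝ (H →L[ℂ] H) (s.card : ℝ)⁻¹) x = (s.card : ℝ)⁻¹ * ‖x‖ ^ 2 := by
      rw [Algebra.algebraMap_eq_smul_one, qf_smul, qf_one]
    have h3 : ‖x‖ ^ 2 ≤ s.card * ∑ r ∈ s, ‖L r x‖ ^ 2 := by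
      have : x = ∑ r ∈ s, L r x := by
        conv_lhs => rw [← one_apply_eq_self (F := H →L[ℂ] H) x, ← hL]
        simp
      calc ‖x‖ ^ 2 = ‖∑ r ∈ s, L r x‖ ^ 2 := by rw [← this]
        _ ≤ (∑ r ∈ s, ‖L r x‖) ^ 2 := by gcongr; exact norm_sum_le _ _
        _ ≤ _ := sq_sum_le_card_mul_sum_sq
    have h4 : (s.card : ℝ)⁻¹ * ‖x‖ ^ 2 ≤ ∑ r ∈ s, ‖L r x‖ ^ 2 := by
      rw [inv_mul_le_iff₀ hcard]; exact h3
    rw [ContinuousLinearMap.reApplyInnerSelf_apply, sub_apply, inner_sub_left, map_sub]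
    change 0 ≤ qf _ _ - qf _ _
    rw [h1, h2]
    linarith

lemma exists_sqrt_inv {M : H →L[ℂ] H} {c : ℝ} (hc : 0 < c) (hM : IsSelfAdjoint M)
    (h : algebraMap ℝ (H →L[ℂ] H) c ≤ M) :
    ∃ S R : H →L[ℂ] H, IsSelfAdjoint S ∧ IsSelfAdjoint R ∧ S * S = M ∧ S * R = 1 ∧ R * S = 1 := by
  have hpos : ∀ x ∈ spectrum ℝ M, 0 < x := fun x hx =>
    hc.trans_le ((algebraMap_le_iff_le_spectrum (a := M) hM).1 h x hx)
  have hS : ContinuousOn (fun x : ℝ => √x) (spectrum ℝ M) := Real.continuous_sqrt.continuousOn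
  have hR : ContinuousOn (fun x : ℝ => (√x)⁻¹) (spectrum ℝ M) :=
    hS.inv₀ fun x hx => (Real.sqrt_pos.2 (hpos x hx)).ne'
  refine ⟨cfc (fun x : ℝ => √x) M, cfc (fun x : ℝ => (√x)⁻¹) M,
    IsSelfAdjoint.cfc, IsSelfAdjoint.cfc, ?_, ?_, ?_⟩
  · rw [← cfc_mul _ _ M hS hS, cfc_congr (g := fun x => x)
      (fun x hx => Real.mul_self_sqrt (hpos x hx).le), cfc_id' ℝ M]
  · rw [← cfc_mul _ _ M hS hR, cfc_congr (g := fun _ => 1)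
      (fun x hx => mul_inv_cancel₀ (Real.sqrt_pos.2 (hpos x hx)).ne'), cfc_const_one ℝ M]
  · rw [← cfc_mul _ _ M hR hS, cfc_congr (g := fun _ => 1)
      (fun x hx => inv_mul_cancel₀ (Real.sqrt_pos.2 (hpos x hx)).ne'), cfc_const_one ℝ M]

/-- If `q(T)` is compact, then `T` is a compact perturbation of an exact solution of `q(T₀) = 0`.
The form `M = ∑ L_r* L_r` is an equivalent inner product for which `T` is self-adjoint modulo
compacts, because the roots are real; conjugating by its square root reduces to
`selfAdjoint_model`. -/
lemma exists_algebraic_model [TopologicalSpace.SeparableSpace H] {T : H →L[ℂ] H} {s : Finset ℝ}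
    (hs : s.Nonempty) (h : Cpt (aeval T (rootPoly s))) :
    ∃ T₀ : H →L[ℂ] H, Cpt (T₀ - T) ∧ aeval T₀ (rootPoly s) = 0 := by
  obtain ⟨L, hL, hLc⟩ := exists_almost_idempotents hs h
  obtain ⟨M, hM⟩ : ∃ M : H →L[ℂ] H, M = ∑ r ∈ s, star (L r) * L r := ⟨_, rfl⟩
  have hMsa : IsSelfAdjoint M := by
    rw [hM]; exact isSelfAdjoint_sum _ fun r _ => IsSelfAdjoint.star_mul_self _
  have hcard : (0 : ℝ) < (s.card : ℝ)⁻¹ := inv_pos.2 (by exact_mod_cast hs.card_pos)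
  obtain ⟨S, R, hS, hR, hSS, hSR, hRS⟩ := exists_sqrt_inv hcard hMsa
    (by rw [hM]; exact le_sum_star_mul_self hs hL)
  have hcomm : Cpt (M * T - star T * M) := by
    have : M * T - star T * M = ∑ r ∈ s, (star (L r) * (L r * T - (r : ℂ) • L r) -
        star (L r * T - (r : ℂ) • L r) * L r) := by
      rw [hM, Finset.sum_mul, Finset.mul_sum, ← Finset.sum_sub_distrib]
      refine Finset.sum_congr rfl fun r _ => ?_
      simp only [star_sub, star_mul, star_smul, mul_sub, sub_mul, mul_smul_comm, smul_mul_assoc,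
        RCLike.star_def, Complex.conj_ofReal, mul_assoc]
      abel
    rw [this]
    exact Cpt.sum fun r hr => ((hLc r hr).mul_left _).sub ((hLc r hr).adj.mul_right _)
  obtain ⟨T₁, hT₁⟩ : ∃ T₁ : H →L[ℂ] H, T₁ = S * T * R := ⟨_, rfl⟩
  have hstar : star T₁ = R * star T * S := by
    rw [hT₁, star_mul, star_mul, hS.star_eq, hR.star_eq, mul_assoc]
  have hd : Cpt (T₁ - star T₁) := by
    have : T₁ - star T₁ = R * (M * T - star T * M) * R := by
      rw [hstar, hT₁, ← hSS]
      calc S * T * R - R * star T * S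
          = (R * S) * S * T * R - R * star T * S * (S * R) := by rw [hRS, hSR]; simp
        _ = _ := by noncomm_ring
    rw [this]
    exact (hcomm.mul_left _).mul_right _
  obtain ⟨A, hA⟩ : ∃ A : H →L[ℂ] H, A = (1 / 2 : ℂ) • (T₁ + star T₁) := ⟨_, rfl⟩
  have hAsa : IsSelfAdjoint A := by
    rw [hA, IsSelfAdjoint, star_smul, star_add, star_star, add_comm]
    congr 1
    simp
  have hAT : Cpt (A - T₁) := by
    have : A - T₁ = (-(1 / 2) : ℂ) • (T₁ - star T₁) := by
      rw [hA]; module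
    rw [this]
    exact hd.smul _
  have hpA : Cpt (aeval A (rootPoly s)) := by
    have h1 : Cpt (aeval T₁ (rootPoly s)) := by
      rw [hT₁, aeval_conj hRS hSR]
      exact (h.mul_left _).mul_right _
    simpa using (Cpt.aeval_sub hAT (rootPoly s)).add h1
  obtain ⟨D, hDA, hD⟩ := selfAdjoint_model hAsa hs hpA
  refine ⟨R * D * S, ?_, by rw [aeval_conj hSR hRS, hD]; simp⟩
  have : R * D * S - T = R * ((D - A) + (A - T₁)) * S := by
    rw [hT₁]
    calc R * D * S - T = R * D * S - (R * S) * T * (R * S) := by rw [hRS]; simp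
      _ = _ := by noncomm_ring
  rw [this]
  exact ((hDA.add hAT).mul_left _).mul_right _

/-! ### Triangular form -/

/-- `Q` is a resolution of the identity by mutually orthogonal projections, indexed by `s`, for
which `X` is upper triangular with the scalar `r` as its `r`-th diagonal block. -/
structure IsTriangular (X : H →L[ℂ] H) (s : Finset ℝ) (Q : ℝ → H →L[ℂ] H) : Prop where
  selfAdjoint : ∀ r ∈ s, IsSelfAdjoint (Q r)
  idem : ∀ r ∈ s, Q r * Q r = Q r
  ortho : ∀ r ∈ s, ∀ r' ∈ s, r ≠ r' → Q r * Q r' = 0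
  sum_eq : ∑ r ∈ s, Q r = 1
  triang : ∀ i ∈ s, ∀ j ∈ s, j ≤ i → Q i * (X - (j : ℂ) • 1) * Q j = 0

/-- The orthogonal projection onto the kernel of `B`, described algebraically. -/
lemma exists_kerProj (B : H →L[ℂ] H) : ∃ E : H →L[ℂ] H, IsSelfAdjoint E ∧ B * E = 0 ∧
    ∀ X : H →L[ℂ] H, B * X = 0 → E * X = X := by
  refine ⟨B.ker.starProjection, isSelfAdjoint_starProjection _, ?_, fun X hX => ?_⟩
  · ext x
    exact Submodule.starProjection_apply_mem B.ker x
  · ext x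
    refine Submodule.starProjection_eq_self_iff.2 ?_
    exact congrArg (fun Y : H →L[ℂ] H => Y x) hX

lemma rootPoly_insert {a : ℝ} {s : Finset ℝ} (h : a ∉ s) :
    rootPoly (insert a s) = rootPoly s * (X - C (a : ℂ)) := by
  classical
  rw [rootPoly, Finset.prod_insert h, mul_comm, rootPoly]

lemma aeval_X_sub_C' (T : H →L[ℂ] H) (a : ℂ) : aeval T (X - C a) = T - a • 1 := by
  rw [map_sub, aeval_X, aeval_C, Algebra.algebraMap_eq_smul_one]

lemma filter_insert_max {a : ℝ} {s : Finset ℝ} (h : ∀ x ∈ s, x < a) :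
    (insert a s).filter (· ≤ a) = insert a s ∧ (insert a s).filter (· < a) = s ∧
      ∀ r ∈ s, (insert a s).filter (· ≤ r) = s.filter (· ≤ r) ∧
        (insert a s).filter (· < r) = s.filter (· < r) := by
  refine ⟨?_, ?_, fun r hr => ⟨?_, ?_⟩⟩
  · exact Finset.filter_true_of_mem (by grind)
  · ext x; have := h x; grind
  · ext x; have := h r hr; grind
  · ext x; have := h r hr; grind

lemma sum_telescope (F : Finset ℝ → H →L[ℂ] H) (s : Finset ℝ) :
    ∑ r ∈ s, (F (s.filter (· ≤ r)) - F (s.filter (· < r))) = F s - F ∅ := by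
  induction s using Finset.induction_on_max with
  | empty => simp
  | insert a s h ih =>
    obtain ⟨h1, h2, h3⟩ := filter_insert_max h
    rw [Finset.sum_insert (fun ha => lt_irrefl _ (h a ha)), h1, h2,
      Finset.sum_congr rfl fun r hr => by rw [(h3 r hr).1, (h3 r hr).2], ih]
    abel

/-- `Q r` is the difference of the projections onto the kernels of the products of `T - a` over the
roots `a ≤ r` and over the roots `a < r`. -/
lemma exists_isTriangular {T : H →L[ℂ] H} {s : Finset ℝ} (h : aeval T (rootPoly s) = 0) :
    ∃ Q : ℝ → H →L[ℂ] H, IsTriangular T s Q := by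
  choose E hEsa hE0 hE1 using fun u : Finset ℝ => exists_kerProj (aeval T (rootPoly u))
  have hmul : ∀ u v : Finset ℝ, u ⊆ v → E v * E u = E u := fun u v huv => by
    refine hE1 v _ ?_
    obtain ⟨p, hp⟩ : rootPoly u ∣ rootPoly v := Finset.prod_dvd_prod_of_subset _ _ _ huv
    rw [hp, mul_comm, map_mul, mul_assoc, hE0, mul_zero]
  have hmul' : ∀ u v : Finset ℝ, u ⊆ v → E u * E v = E u := fun u v huv => by
    have := congrArg star (hmul u v huv)
    rwa [star_mul, (hEsa u).star_eq, (hEsa v).star_eq] at this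
  have htri : ∀ u : Finset ℝ, ∀ a ∉ u, E u * ((T - (a : ℂ) • 1) * E (insert a u)) =
      (T - (a : ℂ) • 1) * E (insert a u) := fun u a ha => by
    refine hE1 u _ ?_
    rw [← aeval_X_sub_C', ← mul_assoc, ← map_mul, ← rootPoly_insert ha, hE0]
  have hle : ∀ r ∈ s, s.filter (· ≤ r) = insert r (s.filter (· < r)) := fun r hr => by
    ext x; grind
  have hsub : ∀ r, s.filter (· < r) ⊆ s.filter (· ≤ r) := fun r x hx => by grind
  have hsub' : ∀ r r', r < r' → s.filter (· ≤ r) ⊆ s.filter (· < r') := fun r r' _ x hx => by grind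
  have hQsa : ∀ r, IsSelfAdjoint (E (s.filter (· ≤ r)) - E (s.filter (· < r))) := fun r =>
    (hEsa _).sub (hEsa _)
  have hlt : ∀ r r', r < r' → (E (s.filter (· ≤ r)) - E (s.filter (· < r))) *
      (E (s.filter (· ≤ r')) - E (s.filter (· < r'))) = 0 := fun r r' hrr => by
    rw [sub_mul, mul_sub, mul_sub, hmul' _ _ (hsub' r r' hrr),
      hmul' _ _ ((hsub' r r' hrr).trans (hsub r')),
      hmul' _ _ ((hsub r).trans (hsub' r r' hrr)),
      hmul' _ _ (((hsub r).trans (hsub' r r' hrr)).trans (hsub r'))]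
    abel
  refine ⟨fun r => E (s.filter (· ≤ r)) - E (s.filter (· < r)), fun r _ => hQsa r, fun r _ => ?_,
    fun r _ r' _ hne => ?_, ?_, fun i _ j hj hji => ?_⟩
  · rw [sub_mul, mul_sub, mul_sub, hmul _ _ subset_rfl, hmul _ _ subset_rfl, hmul _ _ (hsub r),
      hmul' _ _ (hsub r)]
    abel
  · rcases lt_or_gt_of_ne hne with h1 | h1
    · exact hlt r r' h1
    · have := congrArg star (hlt r' r h1)
      rwa [star_mul, (hQsa r).star_eq, (hQsa r').star_eq, star_zero] at this
  · rw [sum_telescope E s]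
    have h1 : E s = 1 := by
      have := hE1 s 1 (by rw [h, zero_mul])
      rwa [mul_one] at this
    have h2 : E ∅ = 0 := by
      have := hE0 ∅
      rwa [rootPoly, Finset.prod_empty, map_one, one_mul] at this
    rw [h1, h2, sub_zero]
  · have h1 := htri (s.filter (· < j)) j (by simp)
    rw [← hle j hj] at h1
    have h2 : (E (s.filter (· ≤ i)) - E (s.filter (· < i))) * E (s.filter (· < j)) = 0 := by
      have : s.filter (· < j) ⊆ s.filter (· < i) := fun x hx => by grind
      rw [sub_mul, hmul _ _ this, hmul _ _ (this.trans (hsub i)), sub_self]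
    have h3 : E (s.filter (· ≤ j)) * (E (s.filter (· ≤ j)) - E (s.filter (· < j))) =
        E (s.filter (· ≤ j)) - E (s.filter (· < j)) := by
      rw [mul_sub, hmul _ _ subset_rfl, hmul _ _ (hsub j)]
    rw [← h3]
    calc _ = (E (s.filter (· ≤ i)) - E (s.filter (· < i))) *
          ((T - (j : ℂ) • 1) * E (s.filter (· ≤ j))) *
            (E (s.filter (· ≤ j)) - E (s.filter (· < j))) := by simp only [mul_assoc]
      _ = 0 := by rw [← h1, ← mul_assoc, h2, zero_mul, zero_mul]

lemma aeval_mul_eq_zero {X : H →L[ℂ] H} {Q : ℝ → H →L[ℂ] H} (s : Finset ℝ)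
    (h : ∀ a ∈ s, (X - (a : ℂ) • 1) * Q a =
      (∑ i ∈ s.filter (· < a), Q i) * ((X - (a : ℂ) • 1) * Q a)) :
    ∀ b ∈ s, aeval X (rootPoly s) * Q b = 0 := by
  induction s using Finset.induction_on_max with
  | empty => simp
  | insert a s hmax ih =>
    obtain ⟨h1, h2, h3⟩ := filter_insert_max hmax
    have ha : a ∉ s := fun ha => lt_irrefl _ (hmax a ha)
    have ih' := ih fun b hb => by
      have := h b (Finset.mem_insert_of_mem hb)
      rwa [(h3 b hb).2] at this
    intro b hb
    rcases Finset.mem_insert.1 hb with rfl | hb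
    · have := h b (Finset.mem_insert_self _ _)
      rw [h2] at this
      rw [rootPoly_insert ha, map_mul, aeval_X_sub_C', mul_assoc, this, ← mul_assoc,
        Finset.mul_sum, Finset.sum_eq_zero ih', zero_mul]
    · rw [rootPoly_insert ha, mul_comm, map_mul, mul_assoc, ih' b hb, mul_zero]

lemma IsTriangular.aeval_eq_zero {X : H →L[ℂ] H} {s : Finset ℝ} {Q : ℝ → H →L[ℂ] H}
    (h : IsTriangular X s Q) : aeval X (rootPoly s) = 0 := by
  have key := aeval_mul_eq_zero (X := X) (Q := Q) s fun a ha => by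
    have hone : ∀ Y : H →L[ℂ] H, Y = ∑ i ∈ s, Q i * Y := fun Y => by
      rw [← Finset.sum_mul, h.sum_eq, one_mul]
    refine (hone _).trans ?_
    rw [Finset.sum_mul, Finset.sum_filter]
    refine Finset.sum_congr rfl fun i hi => ?_
    split_ifs with hia
    · rfl
    · rw [← mul_assoc, h.triang i hi a ha (not_lt.1 hia)]
  rw [← mul_one (aeval X (rootPoly s)), ← h.sum_eq, Finset.mul_sum]
  exact Finset.sum_eq_zero key

/-! ### Domination of forms and damping -/

/-- The operator `A = (δ / (δ + E)) ^ (1/2)`. -/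
lemma exists_damping {E : H →L[ℂ] H} (hE : 0 ≤ E) (hEc : Cpt E) {δ : ℝ} (hδ : 0 < δ) :
    ∃ A : H →L[ℂ] H, IsSelfAdjoint A ∧ Cpt (1 - A) ∧ A * A * E = δ • (1 - A * A) ∧
      ∀ B, Commute E B → Commute A B := by
  have hEsa : IsSelfAdjoint E := IsSelfAdjoint.of_nonneg hE
  have hpos : ∀ x ∈ spectrum ℝ E, 0 ≤ x := fun x hx => spectrum_nonneg_of_nonneg hE hx
  obtain ⟨m, hm, hmpos, hmx⟩ : ∃ m : ℝ → ℝ, Continuous m ∧ (∀ x, 0 < m x) ∧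
      ∀ x, 0 ≤ x → m x = δ + x := by
    -- the cut-off at `0` makes the function continuous on all of `ℝ`
    refine ⟨fun x => δ + max x 0, by fun_prop, fun x => by positivity, fun x hx => ?_⟩
    simp [hx]
  obtain ⟨f, hf, hf0, hff⟩ : ∃ f : ℝ → ℝ, Continuous f ∧ (∀ x, 0 ≤ f x) ∧
      ∀ x, f x * f x = δ / m x :=
    ⟨fun x => √(δ / m x), (continuous_const.div hm fun x => (hmpos x).ne').sqrt,
      fun x => Real.sqrt_nonneg _, fun x => Real.mul_self_sqrt (div_nonneg hδ.le (hmpos x).le)⟩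
  have hfE : ContinuousOn f (spectrum ℝ E) := hf.continuousOn
  have hidE : ContinuousOn (fun x : ℝ => x) (spectrum ℝ E) := continuousOn_id
  have hg : Continuous fun x => (m x * (1 + f x))⁻¹ :=
    (hm.mul (continuous_const.add hf)).inv₀ fun x =>
      (mul_pos (hmpos x) (add_pos_of_pos_of_nonneg one_pos (hf0 x))).ne'
  have hsq : cfc f E * cfc f E = cfc (fun x => f x * f x) E := (cfc_mul f f E hfE hfE).symm
  refine ⟨cfc f E, IsSelfAdjoint.cfc, ?_, ?_, fun B hB => hB.cfc_real f⟩
  · have h1 : 1 - cfc f E = cfc (fun x => (m x * (1 + f x))⁻¹) E * E := by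
      have e1 : (1 : H →L[ℂ] H) - cfc f E = cfc (fun x => 1 - f x) E := by
        rw [cfc_sub (fun _ => (1 : ℝ)) f E continuousOn_const hfE, cfc_const_one ℝ E]
      have e2 : cfc (fun x => (m x * (1 + f x))⁻¹) E * E =
          cfc (fun x => (m x * (1 + f x))⁻¹ * x) E := by
        rw [cfc_mul (fun x => (m x * (1 + f x))⁻¹) (fun x => x) E hg.continuousOn hidE,
          cfc_id' ℝ E]
      rw [e1, e2]
      refine cfc_congr fun x hx => ?_
      have h2 := hff x
      have h3 := hmx x (hpos x hx)
      have h4 := hmpos x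
      have h5 := hf0 x
      rw [eq_div_iff h4.ne'] at h2
      have : (1 - f x) * (m x * (1 + f x)) = x := by linear_combination h3 - h2
      change 1 - f x = (m x * (1 + f x))⁻¹ * x
      rw [eq_inv_mul_iff_mul_eq₀ (by positivity)]
      linarith
    rw [h1]
    exact hEc.mul_left _
  · have e1 : cfc f E * cfc f E * E = cfc (fun x => f x * f x * x) E := by
      rw [hsq, cfc_mul (fun x => f x * f x) (fun x => x) E (hfE.mul hfE) hidE, cfc_id' ℝ E]
    have e2 : δ • (1 - cfc f E * cfc f E) = cfc (fun x => δ * (1 - f x * f x)) E := by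
      rw [hsq, cfc_const_mul δ (fun x => 1 - f x * f x) E (continuousOn_const.sub (hfE.mul hfE)),
        cfc_sub (fun _ => (1 : ℝ)) (fun x => f x * f x) E continuousOn_const (hfE.mul hfE),
        cfc_const_one ℝ E]
    rw [e1, e2]
    refine cfc_congr fun x hx => ?_
    have h2 := hff x
    have h3 := hmx x (hpos x hx)
    have h4 := hmpos x
    rw [eq_div_iff h4.ne'] at h2
    change f x * f x * x = δ * (1 - f x * f x)
    rw [h3] at h2
    linear_combination h2

/-- The form of `X` is dominated by the quadratic form of `E`. For `E = c • 1` this says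
`‖X‖ ≤ c`, see `Dom.norm_le`. -/
def Dom (X E : H →L[ℂ] H) : Prop := ∀ u v, 2 * RCLike.re (inner ℂ (X u) v) ≤ qf E u + qf E v

lemma Dom.add {X Y E F : H →L[ℂ] H} (h : Dom X E) (h' : Dom Y F) : Dom (X + Y) (E + F) := by
  intro u v
  rw [qf_add, qf_add, add_apply, inner_add_left, map_add]
  linarith [h u v, h' u v]

lemma Dom.sum {ι : Type*} {s : Finset ι} {X E : ι → H →L[ℂ] H} (h : ∀ i ∈ s, Dom (X i) (E i)) :
    Dom (∑ i ∈ s, X i) (∑ i ∈ s, E i) := by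
  intro u v
  rw [qf_sum, qf_sum, ← Finset.sum_add_distrib]
  simp only [sum_apply, sum_inner, map_sum, Finset.mul_sum]
  exact Finset.sum_le_sum fun i hi => h i hi u v

lemma Dom.conj {X E : H →L[ℂ] H} (h : Dom X E) (B : H →L[ℂ] H) :
    Dom (star B * X * B) (star B * E * B) := by
  intro u v
  rw [qf_star_mul, qf_star_mul, mul_apply_eq_comp, mul_apply_eq_comp,
    ContinuousLinearMap.star_eq_adjoint, ContinuousLinearMap.adjoint_inner_left]
  exact h _ _

lemma Dom.mono {X E F : H →L[ℂ] H} (h : Dom X E) (hEF : ∀ u, qf E u ≤ qf F u) : Dom X F :=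
  fun u v => (h u v).trans (add_le_add (hEF u) (hEF v))

lemma Dom.of_nonneg {B : H →L[ℂ] H} (hB : 0 ≤ B) {r c : ℝ} (hr : |r| ≤ c) :
    Dom ((r : ℂ) • B) (c • B) := by
  intro u v
  have hsymm : RCLike.re (inner ℂ (B v) u) = RCLike.re (inner ℂ (B u) v) := by
    have := (ContinuousLinearMap.isSelfAdjoint_iff_isSymmetric.1 (IsSelfAdjoint.of_nonneg hB)) u v
    rw [← inner_re_symm]
    exact (congrArg RCLike.re this).symm
  have h1 := qf_nonneg hB (u + v)
  have h2 := qf_nonneg hB (u - v)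
  have h3 : qf B (u + v) = qf B u + qf B v + 2 * RCLike.re (inner ℂ (B u) v) := by
    unfold qf
    simp only [map_add, inner_add_left, inner_add_right]
    linarith
  have h4 : qf B (u - v) = qf B u + qf B v - 2 * RCLike.re (inner ℂ (B u) v) := by
    unfold qf
    simp only [map_sub, inner_sub_left, inner_sub_right]
    linarith
  have h5 : RCLike.re (inner ℂ (((r : ℂ) • B) u) v) = r * RCLike.re (inner ℂ (B u) v) := by
    rw [smul_apply, inner_smul_left]; simp
  rw [h5, qf_smul, qf_smul]
  have h6 : |2 * RCLike.re (inner ℂ (B u) v)| ≤ qf B u + qf B v :=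
    abs_le.2 ⟨by linarith, by linarith⟩
  calc 2 * (r * RCLike.re (inner ℂ (B u) v)) ≤ |r * (2 * RCLike.re (inner ℂ (B u) v))| := by
        refine le_trans (le_of_eq (by ring)) (le_abs_self _)
    _ = |r| * |2 * RCLike.re (inner ℂ (B u) v)| := abs_mul _ _
    _ ≤ c * (qf B u + qf B v) := mul_le_mul hr h6 (abs_nonneg _) ((abs_nonneg r).trans hr)
    _ = _ := by ring

lemma Dom.of_norm_le {S : H →L[ℂ] H} {c : ℝ} (h : ‖S‖ ≤ c) : Dom S (c • 1) := by
  intro u v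
  rw [qf_smul, qf_smul, qf_one, qf_one]
  have h1 : RCLike.re (inner ℂ (S u) v) ≤ c * ‖u‖ * ‖v‖ :=
    (re_inner_le_norm _ _).trans (mul_le_mul_of_nonneg_right
      ((S.le_opNorm u).trans (mul_le_mul_of_nonneg_right h (norm_nonneg _))) (norm_nonneg _))
  have hc : 0 ≤ c := (norm_nonneg _).trans h
  nlinarith [mul_nonneg hc (sq_nonneg (‖u‖ - ‖v‖))]

lemma Dom.norm_le {X : H →L[ℂ] H} {c : ℝ} (hc : 0 ≤ c) (h : Dom X (c • 1)) : ‖X‖ ≤ c := by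
  refine X.opNorm_le_bound hc fun u => ?_
  rcases eq_or_ne u 0 with rfl | hu
  · simp
  rcases eq_or_ne (X u) 0 with hX | hX
  · rw [hX, norm_zero]; positivity
  have hu' : 0 < ‖u‖ := norm_pos_iff.2 hu
  have hX' : 0 < ‖X u‖ := norm_pos_iff.2 hX
  -- the form inequality is sharp when the second vector is `X u` rescaled to the length of `u`
  have h1 := h u (((‖u‖ / ‖X u‖ : ℝ) : ℂ) • X u)
  rw [qf_smul, qf_smul, qf_one, qf_one, inner_smul_right, norm_smul, Complex.norm_real,
    Real.norm_of_nonneg (by positivity), div_mul_cancel₀ _ hX'.ne'] at h1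
  have h2 : RCLike.re (((‖u‖ / ‖X u‖ : ℝ) : ℂ) * inner ℂ (X u) (X u)) = ‖u‖ * ‖X u‖ := by
    rw [inner_self_eq_norm_sq_to_K]
    have : ((‖u‖ / ‖X u‖ : ℝ) : ℂ) * ((‖X u‖ : ℝ) : ℂ) ^ 2 = ((‖u‖ * ‖X u‖ : ℝ) : ℂ) := by
      rw [← Complex.ofReal_pow, ← Complex.ofReal_mul]
      congr 1
      field_simp
    exact (congrArg Complex.re this).trans (Complex.ofReal_re _)
  rw [h2] at h1
  have h3 : ‖u‖ * ‖X u‖ ≤ ‖u‖ * (c * ‖u‖) := by nlinarith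
  exact le_of_mul_le_mul_left h3 hu'

lemma qf_sum_apply_le {E : H →L[ℂ] H} (hE : 0 ≤ E) {ι : Type*} (s : Finset ι) (x : ι → H) :
    qf E (∑ i ∈ s, x i) ≤ s.card * ∑ i ∈ s, qf E (x i) := by
  obtain ⟨B, rfl⟩ := CStarAlgebra.nonneg_iff_eq_star_mul_self.1 hE
  simp only [qf_star_mul_self, map_sum]
  calc ‖∑ i ∈ s, B (x i)‖ ^ 2 ≤ (∑ i ∈ s, ‖B (x i)‖) ^ 2 := by gcongr; exact norm_sum_le _ _
    _ ≤ _ := sq_sum_le_card_mul_sum_sq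

/-- If the diagonal block `Q T Q` is the scalar `r` of extremal modulus `c`, then the rest of the
column `T Q` is compact: `S` is a contraction times `c`, and expanding `‖(S - r) Q x‖²` leaves only the
term coming from the compact operator `T - S`. -/
lemma cpt_sub_mul_proj {T S Q : H →L[ℂ] H} {c r : ℝ} (hTS : Cpt (T - S)) (hS : ‖S‖ ≤ c)
    (hr : |r| = c) (hQ : IsSelfAdjoint Q) (hQQ : Q * Q = Q) (hT : Q * T * Q = (r : ℂ) • Q) :
    Cpt ((T - (r : ℂ) • 1) * Q) := by
  have hc : 0 ≤ c := (norm_nonneg _).trans hS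
  have key : Cpt ((S - (r : ℂ) • 1) * Q) := by
    refine Cpt.of_sq_le (Z := ((2 * c : ℝ) : ℂ) • (Q * (T - S) * Q))
      (((hTS.mul_left _).mul_right _).smul _) fun x => ?_
    have hin : ∀ Y : H →L[ℂ] H, inner ℂ (Y (Q x)) (Q x) = inner ℂ ((Q * Y * Q) x) x := fun Y => by
      rw [mul_apply_eq_comp, mul_apply_eq_comp]
      exact ((ContinuousLinearMap.isSelfAdjoint_iff_isSymmetric.1 hQ) _ _).symm
    have h1 : RCLike.re (inner ℂ (T (Q x)) (Q x)) = r * ‖Q x‖ ^ 2 := by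
      rw [hin, hT, smul_apply, inner_smul_left]
      have : inner ℂ (Q x) x = inner ℂ (Q x) (Q x) := by
        have := hin 1
        rw [mul_one, hQQ] at this
        rw [← this, one_apply_eq_self]
      rw [this, ← inner_self_eq_norm_sq (𝕜 := ℂ)]; simp
    have h2 : RCLike.re (inner ℂ (S (Q x)) (Q x)) =
        r * ‖Q x‖ ^ 2 - RCLike.re (inner ℂ ((Q * (T - S) * Q) x) x) := by
      rw [← h1, ← hin, sub_apply, inner_sub_left, map_sub]; ring
    have h3 : |RCLike.re (inner ℂ ((Q * (T - S) * Q) x) x)| ≤ ‖(Q * (T - S) * Q) x‖ * ‖x‖ :=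
      (RCLike.abs_re_le_norm _).trans (norm_inner_le_norm _ _)
    have h4 : ‖S (Q x)‖ ≤ c * ‖Q x‖ :=
      (S.le_opNorm _).trans (mul_le_mul_of_nonneg_right hS (norm_nonneg _))
    have h5 : ‖((S - (r : ℂ) • 1) * Q) x‖ ^ 2 =
        ‖S (Q x)‖ ^ 2 - 2 * (r * RCLike.re (inner ℂ (S (Q x)) (Q x))) + (c * ‖Q x‖) ^ 2 := by
      rw [mul_apply_eq_comp, sub_apply, smul_apply, one_apply_eq_self, @norm_sub_sq ℂ,
        inner_smul_right, norm_smul, Complex.norm_real, Real.norm_eq_abs, hr]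
      simp
    have h6 : ‖(((2 * c : ℝ) : ℂ) • (Q * (T - S) * Q)) x‖ = 2 * c * ‖(Q * (T - S) * Q) x‖ := by
      rw [smul_apply, norm_smul, Complex.norm_real, Real.norm_of_nonneg (by positivity)]
    have h7 : r * RCLike.re (inner ℂ ((Q * (T - S) * Q) x) x) ≤
        c * (‖(Q * (T - S) * Q) x‖ * ‖x‖) := by
      refine (le_abs_self _).trans ?_
      rw [abs_mul, hr]
      exact mul_le_mul_of_nonneg_left h3 hc
    have h8 : r * r = c * c := by rw [← hr, abs_mul_abs_self]
    have h9 : ‖S (Q x)‖ ^ 2 ≤ (c * ‖Q x‖) ^ 2 := pow_le_pow_left₀ (norm_nonneg _) h4 2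
    rw [h5, h6, h2]
    have h10 : r * (r * ‖Q x‖ ^ 2 - RCLike.re (inner ℂ ((Q * (T - S) * Q) x) x)) =
        (c * ‖Q x‖) ^ 2 - r * RCLike.re (inner ℂ ((Q * (T - S) * Q) x) x) := by
      linear_combination ‖Q x‖ ^ 2 * h8
    rw [h10]
    linarith
  have : (T - (r : ℂ) • 1) * Q = (S - (r : ℂ) • 1) * Q + (T - S) * Q := by noncomm_ring
  rw [this]
  exact key.add (hTS.mul_right _)

/-! ### Correcting the norm -/

lemma Cpt.real_smul {A : H →L[ℂ] H} (r : ℝ) (hA : Cpt A) : Cpt (r • A) := by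
  rw [← Complex.coe_smul r A]
  exact Cpt.smul _ hA

/-- Modulo compact operators, a triangular operator `T₀` of essential norm at most `c`, with
diagonal entries bounded by `c`, can be modified, keeping its shape, so that its norm is at most `c`. -/
lemma exists_norm_le {T₀ S : H →L[ℂ] H} {s : Finset ℝ} {Q : ℝ → H →L[ℂ] H} {c : ℝ}
    (h : IsTriangular T₀ s Q) (hTS : Cpt (T₀ - S)) (hS : ‖S‖ ≤ c) (hs : ∀ r ∈ s, |r| ≤ c) :
    ∃ X : H →L[ℂ] H, Cpt (X - T₀) ∧ aeval X (rootPoly s) = 0 ∧ ‖X‖ ≤ c := by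
  have hc : 0 ≤ c := (norm_nonneg _).trans hS
  obtain ⟨g, b, hg, hb, hgb⟩ : ∃ g b : Finset ℝ, (∀ r ∈ g, r ∈ s ∧ |r| < c) ∧
      (∀ r ∈ b, r ∈ s ∧ |r| = c) ∧
      ∀ F : ℝ → H →L[ℂ] H, ∑ r ∈ g, F r + ∑ r ∈ b, F r = ∑ r ∈ s, F r := by
    refine ⟨s.filter (|·| < c), s.filter (¬ |·| < c), fun r hr => Finset.mem_filter.1 hr,
      fun r hr => ?_, fun F => Finset.sum_filter_add_sum_filter_not _ _ _⟩
    obtain ⟨h1, h2⟩ := Finset.mem_filter.1 hr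
    exact ⟨h1, le_antisymm (hs r h1) (not_lt.1 h2)⟩
  have hgs : ∀ r ∈ g, r ∈ s := fun r hr => (hg r hr).1
  have hbs : ∀ r ∈ b, r ∈ s := fun r hr => (hb r hr).1
  have hQc : ∀ i ∈ s, ∀ j ∈ s, Commute (Q i) (Q j) := fun i hi j hj => by
    rcases eq_or_ne i j with rfl | hij
    · exact Commute.refl _
    · rw [Commute, SemiconjBy, h.ortho i hi j hj hij, h.ortho j hj i hi hij.symm]
  obtain ⟨G, hG⟩ : ∃ G : H →L[ℂ] H, G = ∑ r ∈ g, Q r := ⟨_, rfl⟩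
  obtain ⟨D, hD⟩ : ∃ D : H →L[ℂ] H, D = ∑ r ∈ s, (r : ℂ) • Q r := ⟨_, rfl⟩
  have hP : ∑ r ∈ b, Q r = 1 - G := by
    rw [← h.sum_eq, ← hgb Q, ← hG]; abel
  have hGQc : ∀ j ∈ s, Commute G (Q j) := fun j hj => by
    rw [hG]; exact Commute.sum_left _ _ _ fun i hi => hQc i (hgs i hi) j hj
  have hQG : ∀ j ∈ g, Q j * G = Q j := fun j hj => by
    rw [hG, Finset.mul_sum, Finset.sum_eq_single_of_mem j hj, h.idem j (hgs j hj)]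
    exact fun i hi hij => h.ortho j (hgs j hj) i (hgs i hi) hij.symm
  have hGQ : ∀ j ∈ g, G * Q j = Q j := fun j hj => by
    rw [(hGQc j (hgs j hj)).eq, hQG j hj]
  have hGG : G * G = G := by
    conv_lhs => rw [hG, Finset.sum_mul]
    rw [Finset.sum_congr rfl fun i hi => by rw [← hG, hQG i hi], ← hG]
  have hGsa : IsSelfAdjoint G := by
    rw [hG]; exact isSelfAdjoint_sum _ fun r hr => h.selfAdjoint r (hgs r hr)
  have hDQ : ∀ j ∈ s, D * Q j = (j : ℂ) • Q j := fun j hj => by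
    rw [hD, Finset.sum_mul, Finset.sum_eq_single_of_mem j hj, smul_mul_assoc, h.idem j hj]
    intro i hi hij
    rw [smul_mul_assoc, h.ortho i hi j hj hij, smul_zero]
  have hQD : ∀ j ∈ s, Q j * D = (j : ℂ) • Q j := fun j hj => by
    rw [hD, Finset.mul_sum, Finset.sum_eq_single_of_mem j hj, mul_smul_comm, h.idem j hj]
    intro i hi hij
    rw [mul_smul_comm, h.ortho j hj i hi hij.symm, smul_zero]
  have hQTQ : ∀ r ∈ s, Q r * T₀ * Q r = (r : ℂ) • Q r := fun r hr => by
    have := h.triang r hr r hr le_rfl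
    rw [mul_sub, sub_mul, mul_smul_comm, mul_one, smul_mul_assoc, h.idem r hr, sub_eq_zero] at this
    exact this
  -- the blocks with `|r| = c` split off from `T₀` modulo compact operators
  have hbad1 : Cpt ((T₀ - D) * (1 - G)) := by
    rw [← hP, Finset.mul_sum]
    refine Cpt.sum fun r hr => ?_
    have := cpt_sub_mul_proj hTS hS (hb r hr).2 (h.selfAdjoint r (hbs r hr)) (h.idem r (hbs r hr))
      (hQTQ r (hbs r hr))
    rwa [sub_mul, smul_mul_assoc, one_mul, ← hDQ r (hbs r hr), ← sub_mul] at this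
  have hbad2 : Cpt ((1 - G) * (T₀ - D)) := by
    rw [← hP, Finset.sum_mul]
    refine Cpt.sum fun r hr => ?_
    have hr' := hbs r hr
    have h1 := cpt_sub_mul_proj (T := star T₀) (S := star S) (by rw [← star_sub]; exact hTS.adj)
      (by rwa [norm_star]) (hb r hr).2 (h.selfAdjoint r hr') (h.idem r hr') (by
        have := congrArg star (hQTQ r hr')
        rw [star_mul, star_mul, (h.selfAdjoint r hr').star_eq, star_smul,
          (h.selfAdjoint r hr').star_eq, ← mul_assoc] at this
        simpa using this)
    have h2 := h1.adj
    rw [star_mul, star_sub, star_star, star_smul, star_one, (h.selfAdjoint r hr').star_eq,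
      RCLike.star_def, Complex.conj_ofReal, mul_sub, mul_smul_comm, mul_one, ← hQD r hr',
      ← mul_sub] at h2
    exact h2
  -- averaging over the blocks makes the dominating form `E'` commute with every `Q j`, at the cost
  -- of a factor equal to the number of blocks
  obtain ⟨E', hE'c, hE'0, hE'⟩ := exists_form hTS
  obtain ⟨E, hE⟩ : ∃ E : H →L[ℂ] H, E = (g.card : ℝ) • ∑ i ∈ g, Q i * E' * Q i := ⟨_, rfl⟩
  have hEc : Cpt E := by
    rw [hE]; exact (Cpt.sum fun i _ => (hE'c.mul_left _).mul_right _).real_smul _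
  have hE0 : 0 ≤ E := by
    rw [hE]
    refine smul_nonneg (by positivity) (Finset.sum_nonneg fun i hi => ?_)
    have := star_left_conjugate_nonneg hE'0 (Q i)
    rwa [(h.selfAdjoint i (hgs i hi)).star_eq] at this
  have hEQ : ∀ j ∈ s, Commute E (Q j) := fun j hj => by
    rw [hE]
    refine Commute.smul_left (Commute.sum_left _ _ _ fun i hi => ?_) _
    rw [Commute, SemiconjBy]
    rcases eq_or_ne i j with rfl | hij
    · rw [mul_assoc, h.idem i hj, ← mul_assoc, ← mul_assoc, h.idem i hj]
    · rw [mul_assoc, h.ortho i (hgs i hi) j hj hij, ← mul_assoc, ← mul_assoc,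
        h.ortho j hj i (hgs i hi) hij.symm]
      simp
  have hEG : E * G = E := by
    rw [hE, smul_mul_assoc, Finset.sum_mul]
    congr 1
    exact Finset.sum_congr rfl fun i hi => by rw [mul_assoc, hQG i hi]
  have hpinch : ∀ w, qf E' (G w) ≤ qf E w := fun w => by
    have h1 : G w = ∑ i ∈ g, Q i w := by rw [hG, sum_apply]
    rw [h1, hE, qf_smul, qf_sum]
    refine (qf_sum_apply_le hE'0 g fun i => Q i w).trans (le_of_eq ?_)
    congr 1
    refine Finset.sum_congr rfl fun i hi => ?_
    rw [← qf_star_mul, (h.selfAdjoint i (hgs i hi)).star_eq]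
  obtain ⟨δ, hδ, hgδ⟩ : ∃ δ > 0, ∀ r ∈ g, |r| ≤ c - δ := by
    rcases g.eq_empty_or_nonempty with rfl | hne
    · exact ⟨1, one_pos, by simp⟩
    · obtain ⟨r₀, hr₀, hmax⟩ := g.exists_max_image (fun r => |r|) hne
      exact ⟨c - |r₀|, by linarith [(hg r₀ hr₀).2], fun r hr => by linarith [hmax r hr]⟩
  obtain ⟨A, hAsa, hAc, hAE, hAcomm⟩ := exists_damping hE0 hEc hδ
  have hAQ : ∀ j ∈ s, Commute A (Q j) := fun j hj => hAcomm _ (hEQ j hj)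
  have hAE' : Commute A E := hAcomm _ (Commute.refl _)
  have hAG : Commute A G := by
    rw [hG]; exact Commute.sum_right _ _ _ fun i hi => hAQ i (hgs i hi)
  obtain ⟨N, hN⟩ : ∃ N : H →L[ℂ] H, N = G * (T₀ - D) * G := ⟨_, rfl⟩
  refine ⟨D + A * N * A, ?_, ?_, ?_⟩
  · have : D + A * N * A - T₀ = -(A * N * (1 - A)) - (1 - A) * N -
        ((T₀ - D) * (1 - G) + (1 - G) * (T₀ - D) * G) := by
      rw [hN]; noncomm_ring
    rw [this]
    exact ((hAc.mul_left _).neg.sub (hAc.mul_right _)).sub (hbad1.add (hbad2.mul_right _))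
  · refine IsTriangular.aeval_eq_zero (Q := Q)
      ⟨h.selfAdjoint, h.idem, h.ortho, h.sum_eq, fun i hi j hj hji => ?_⟩
    have h1 : (D - (j : ℂ) • 1) * Q j = 0 := by
      rw [sub_mul, hDQ j hj, smul_mul_assoc, one_mul, sub_self]
    have h2 : Q i * (T₀ - D) * Q j = 0 := by
      rw [← h.triang i hi j hj hji, mul_assoc, mul_assoc, sub_mul, hDQ j hj, sub_mul,
        smul_mul_assoc, one_mul]
    have h3 : Q i * (A * N * A) * Q j = A * (G * (Q i * (T₀ - D) * Q j) * G) * A := by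
      rw [hN]
      calc Q i * (A * (G * (T₀ - D) * G) * A) * Q j
          = (Q i * A) * G * (T₀ - D) * G * (A * Q j) := by noncomm_ring
        _ = A * (Q i * G) * (T₀ - D) * (G * Q j) * A := by
          rw [← (hAQ i hi).eq, (hAQ j hj).eq]; noncomm_ring
        _ = _ := by rw [← (hGQc i hi).eq, (hGQc j hj).eq]; noncomm_ring
    calc Q i * (D + A * N * A - (j : ℂ) • 1) * Q j
        = Q i * ((D - (j : ℂ) • 1) * Q j) + Q i * (A * N * A) * Q j := by noncomm_ring
      _ = 0 := by rw [h1, h3, h2]; simp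
  · refine Dom.norm_le hc ?_
    have hGDG : G * D * G = ∑ r ∈ g, (r : ℂ) • Q r := by
      have : D * G = ∑ r ∈ g, (r : ℂ) • Q r := by
        conv_lhs => rw [hG, Finset.mul_sum]
        exact Finset.sum_congr rfl fun i hi => hDQ i (hgs i hi)
      rw [mul_assoc, this, Finset.mul_sum]
      exact Finset.sum_congr rfl fun i hi => by rw [mul_smul_comm, hGQ i hi]
    have hstar : star (G * A) = A * G := by rw [star_mul, hGsa.star_eq, hAsa.star_eq]
    have hX : D + A * N * A = ∑ r ∈ b, (r : ℂ) • Q r +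
        ∑ r ∈ g, (r : ℂ) • (Q r * (1 - A * A)) + star (G * A) * T₀ * (G * A) := by
      have h1 : ∑ r ∈ g, (r : ℂ) • (Q r * (1 - A * A)) = (G * D * G) * (1 - A * A) := by
        rw [hGDG, Finset.sum_mul]
        exact Finset.sum_congr rfl fun i _ => (smul_mul_assoc _ _ _).symm
      have h2 : D = G * D * G + ∑ r ∈ b, (r : ℂ) • Q r := by
        rw [hGDG, hgb fun r => (r : ℂ) • Q r, hD]
      have h3 : A * (G * D * G) = (G * D * G) * A := by
        rw [hGDG]
        exact (Commute.sum_right _ _ _ fun i hi => (hAQ i (hgs i hi)).smul_right _).eq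
      rw [h1, hstar, hN]
      calc D + A * (G * (T₀ - D) * G) * A
          = D + A * G * T₀ * (G * A) - (A * (G * D * G)) * A := by noncomm_ring
        _ = (G * D * G + ∑ r ∈ b, (r : ℂ) • Q r) + A * G * T₀ * (G * A) -
              (G * D * G) * A * A := by rw [h3, ← h2]
        _ = _ := by noncomm_ring
    have hQ0 : ∀ r ∈ s, 0 ≤ Q r := fun r hr => by
      have := star_mul_self_nonneg (Q r)
      rwa [(h.selfAdjoint r hr).star_eq, h.idem r hr] at this
    have hQA0 : ∀ r ∈ s, 0 ≤ Q r * (1 - A * A) := fun r hr => by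
      have h1 : Q r * (1 - A * A) = δ⁻¹ • (star (Q r * A) * E * (Q r * A)) := by
        have h2 : 1 - A * A = δ⁻¹ • (A * A * E) := by
          rw [hAE, smul_smul, inv_mul_cancel₀ hδ.ne', one_smul]
        rw [h2, mul_smul_comm, star_mul, hAsa.star_eq, (h.selfAdjoint r hr).star_eq]
        congr 1
        calc Q r * (A * A * E) = (Q r * A) * (A * E) := by noncomm_ring
          _ = A * (Q r * Q r) * (A * E) := by rw [← (hAQ r hr).eq, h.idem r hr]
          _ = A * Q r * ((Q r * E) * A) := by rw [hAE'.eq]; noncomm_ring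
          _ = _ := by rw [← (hEQ r hr).eq]; noncomm_ring
      rw [h1]
      exact smul_nonneg (inv_nonneg.2 hδ.le) (star_left_conjugate_nonneg hE0 _)
    have hT₀ : Dom T₀ (c • 1 + E') := by
      have := (Dom.of_norm_le hS).add hE'
      rwa [add_sub_cancel] at this
    rw [hX]
    refine (((Dom.sum fun r hr => Dom.of_nonneg (hQ0 r (hbs r hr)) (hb r hr).2.le).add
      (Dom.sum fun r hr => Dom.of_nonneg (hQA0 r (hgs r hr)) (hgδ r hr))).add
        (hT₀.conj (G * A))).mono fun u => ?_
    have h1 : qf (star (G * A) * (c • 1 + E') * (G * A)) u ≤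
        qf (c • (star (G * A) * (G * A)) + star A * E * A) u := by
      rw [qf_star_mul, qf_add, qf_add, qf_smul, qf_smul, qf_star_mul, qf_star_mul_self, qf_one]
      exact add_le_add le_rfl (hpinch (A u))
    -- since `A² E = δ (1 - A²)`, the three dominating forms add up to exactly `c`
    have h2 : ∑ r ∈ b, c • Q r + ∑ r ∈ g, (c - δ) • (Q r * (1 - A * A)) +
        (c • (star (G * A) * (G * A)) + star A * E * A) = c • 1 := by
      obtain ⟨Z, hZ⟩ : ∃ Z : H →L[ℂ] H, Z = (1 - A * A) * G := ⟨_, rfl⟩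
      have hAAG : Commute (1 - A * A) G :=
        (Commute.one_left G).sub_left (hAG.mul_left hAG)
      have e1 : star (G * A) * (G * A) = G - Z := by
        rw [hstar, hZ]
        calc A * G * (G * A) = A * (G * G) * A := by noncomm_ring
          _ = A * (A * G) := by rw [hGG, mul_assoc, hAG.eq]
          _ = _ := by noncomm_ring
      have e2 : star A * E * A = δ • Z := by
        rw [hAsa.star_eq, mul_assoc, ← hAE'.eq, ← mul_assoc, ← hEG, ← mul_assoc, hAE, hZ,
          smul_mul_assoc]
      rw [← Finset.smul_sum, ← Finset.smul_sum, ← Finset.sum_mul, hP, ← hG, ← hAAG.eq, ← hZ, e1, e2]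
      module
    have h3 := congrArg (fun Y => qf Y u) h2
    rw [qf_add _ (c • _ + _)] at h3
    rw [qf_add, ← h3]
    exact add_le_add le_rfl h1

/-! ### Minimal polynomials and the conclusion -/

lemma Cpt.not_one (hdim : ¬ FiniteDimensional ℂ H) : ¬ Cpt (1 : H →L[ℂ] H) := fun h =>
  hdim (FiniteDimensional.of_isCompactOperator_id (𝕜 := ℂ) h)

lemma exists_norm_sub_le (T : H →L[ℂ] H) {ε : ℝ} (hε : 0 < ε) :
    ∃ K : H →L[ℂ] H, Cpt K ∧
      ‖T - K‖ < Metric.infDist T {S : H →L[ℂ] H | IsCompactOperator S} + ε := by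
  have hne : {S : H →L[ℂ] H | IsCompactOperator S}.Nonempty := ⟨0, Cpt.zero⟩
  obtain ⟨K, hK, h⟩ := (Metric.infDist_lt_iff (r := Metric.infDist T
    {S : H →L[ℂ] H | IsCompactOperator S} + ε) hne).1 (by linarith)
  exact ⟨K, hK, by rwa [dist_eq_norm] at h⟩

/-- If `r` is a root that cannot be dropped, then `|r|` is at most the essential norm: otherwise
`T - K - r` is invertible for some compact `K`. -/
lemma abs_root_le {T : H →L[ℂ] H} {s : Finset ℝ} (h : Cpt (aeval T (rootPoly s))) {r : ℝ}
    (hr : r ∈ s) (hmin : ¬ Cpt (aeval T (rootPoly (s.erase r)))) :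
    |r| ≤ Metric.infDist T {S : H →L[ℂ] H | IsCompactOperator S} := by
  by_contra! hcon
  refine hmin ?_
  obtain ⟨K, hK, hTK⟩ := exists_norm_sub_le T (sub_pos.2 hcon)
  rw [add_sub_cancel] at hTK
  have hmem : (r : ℂ) ∈ resolventSet ℂ (T - K) := by
    refine spectrum.mem_resolventSet_of_norm_lt_mul ?_
    rw [Complex.norm_real, Real.norm_eq_abs]
    exact (mul_le_of_le_one_right (norm_nonneg _) ContinuousLinearMap.norm_id_le).trans_lt hTK
  obtain ⟨V, hV⟩ := hmem
  have hVT : (V : H →L[ℂ] H) = (r : ℂ) • 1 - (T - K) := by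
    rw [hV, Algebra.algebraMap_eq_smul_one]
  have h1 : aeval T (rootPoly s) = (T - (r : ℂ) • 1) * aeval T (rootPoly (s.erase r)) := by
    rw [← aeval_X_sub_C', ← map_mul, rootPoly, rootPoly, Finset.mul_prod_erase s (fun r : ℝ => X - C (r : ℂ)) hr]
  have h2 : aeval T (rootPoly (s.erase r)) =
      ((V⁻¹ : (H →L[ℂ] H)ˣ) : H →L[ℂ] H) * (K * aeval T (rootPoly (s.erase r)) -
        aeval T (rootPoly s)) := by
    have : K * aeval T (rootPoly (s.erase r)) - aeval T (rootPoly s) =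
        V * aeval T (rootPoly (s.erase r)) := by
      rw [h1, hVT]; noncomm_ring
    rw [this, ← mul_assoc, V.inv_mul, one_mul]
  rw [h2]
  exact ((hK.mul_right _).sub h).mul_left _

lemma exists_model [TopologicalSpace.SeparableSpace H] (hdim : ¬ FiniteDimensional ℂ H)
    {T : H →L[ℂ] H} {u : Finset ℝ} (h : Cpt (aeval T (rootPoly u))) :
    ∃ K : H →L[ℂ] H, Cpt K ∧ aeval (T + K) (rootPoly u) = 0 ∧
      ‖T + K‖ = Metric.infDist T {S : H →L[ℂ] H | IsCompactOperator S} := by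
  obtain ⟨s, ⟨hsu, hs⟩, hmin⟩ : ∃ s : Finset ℝ, (s ⊆ u ∧ Cpt (aeval T (rootPoly s))) ∧
      ∀ r ∈ s, ¬ Cpt (aeval T (rootPoly (s.erase r))) := by
    classical
    obtain ⟨s, hs, hmin⟩ := (u.powerset.filter fun s => Cpt (aeval T (rootPoly s))).exists_min_image
      Finset.card ⟨u, by simp [h]⟩
    simp only [Finset.mem_filter, Finset.mem_powerset] at hs hmin
    refine ⟨s, hs, fun r hr hcon => ?_⟩
    have := hmin (s.erase r) ⟨(s.erase_subset r).trans hs.1, hcon⟩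
    have := Finset.card_erase_lt_of_mem hr
    omega
  have hne : s.Nonempty := by
    rw [Finset.nonempty_iff_ne_empty]
    rintro rfl
    rw [rootPoly, Finset.prod_empty, map_one] at hs
    exact Cpt.not_one hdim hs
  obtain ⟨c, hc⟩ : ∃ c, c = Metric.infDist T {S : H →L[ℂ] H | IsCompactOperator S} := ⟨_, rfl⟩
  have hc0 : 0 ≤ c := hc ▸ Metric.infDist_nonneg
  have hsc : ∀ r ∈ s, |r| ≤ c := fun r hr => hc ▸ abs_root_le hs hr (hmin r hr)
  obtain ⟨S, hTS, hS⟩ := best_approx (T := T) hc0 fun ε hε => by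
    obtain ⟨K, hK, h1⟩ := exists_norm_sub_le T hε
    exact ⟨K, hK, hc ▸ h1.le⟩
  obtain ⟨T₀, hT₀T, hT₀⟩ := exists_algebraic_model hne hs
  obtain ⟨Q, hQ⟩ := exists_isTriangular hT₀
  obtain ⟨X, hXT₀, hX, hXc⟩ := exists_norm_le hQ (S := S)
    (by simpa using hT₀T.add hTS) hS hsc
  have hXT : Cpt (X - T) := by simpa using hXT₀.add hT₀T
  refine ⟨X - T, hXT, ?_, ?_⟩
  · rw [add_sub_cancel]
    obtain ⟨p, hp⟩ : rootPoly s ∣ rootPoly u := Finset.prod_dvd_prod_of_subset _ _ _ hsu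
    rw [hp, map_mul, hX, zero_mul]
  · rw [add_sub_cancel, ← hc]
    refine le_antisymm hXc ?_
    have := Metric.infDist_le_dist_of_mem (x := T)
      (show T - X ∈ {S : H →L[ℂ] H | IsCompactOperator S} by
        have := hXT.neg; rwa [neg_sub] at this)
    rw [dist_eq_norm, sub_sub_cancel, ← hc] at this
    exact this

lemma prod_ofFn_eq_aeval (X : H →L[ℂ] H) {n : ℕ} {t : Fin n → ℝ} (ht : Function.Injective t) :
    (List.ofFn fun i => X - (t i : ℂ) • 1).prod =
      aeval X (rootPoly (Finset.univ.image t)) := by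
  classical
  rw [rootPoly, Finset.prod_image fun i _ j _ hij => ht hij, ← List.prod_ofFn, map_list_prod,
    List.map_ofFn]
  congr 2
  funext i
  exact (aeval_X_sub_C' X _).symm

end PolyCompact

/-- Let `H` be an infinite-dimensional separable complex Hilbert space,
`T ∈ B(H)`, and `p(t) = (t−t₁)⋯(t−tₙ)` with distinct real roots. If `p(T)` is compact,
then there is a compact operator `K` with `p(T + K) = 0` and `‖T + K‖ = ‖T‖ₑ`, the
essential norm of `T` (the norm of the image of `T` in the Calkin algebra, i.e. the
distance from `T` to the compact operators). -/
theorem stmt_10 {H : Type*} [NormedAddCommGroup H] [InnerProductSpace ℂ H] [CompleteSpace H]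
    [TopologicalSpace.SeparableSpace H] (hdim : ¬ FiniteDimensional ℂ H)
    (n : ℕ) (t : Fin n → ℝ) (ht : Function.Injective t)
    (T : H →L[ℂ] H)
    (hTc : IsCompactOperator (List.ofFn fun i => T - (t i : ℂ) • 1).prod) :
    ∃ K : H →L[ℂ] H, IsCompactOperator K ∧
      (List.ofFn fun i => T + K - (t i : ℂ) • 1).prod = 0 ∧
      ‖T + K‖ = Metric.infDist T {S : H →L[ℂ] H | IsCompactOperator S} := by
  rw [PolyCompact.prod_ofFn_eq_aeval T ht] at hTc
  obtain ⟨K, hK, hp, hn⟩ := PolyCompact.exists_model hdim hTc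
  exact ⟨K, hK, by rw [PolyCompact.prod_ofFn_eq_aeval (T + K) ht]; exact hp, hn⟩
end

section
/- Let A be a unital C*-algebra, I a closed two-sided ideal of A with quotient map q : A → A/I, let S ∈ A be positive and invertible with image s = q(S), let C ≥ 0, and let y ∈ A/I be self-adjoint with ‖s^{−1/2} y s^{1/2}‖ ≤ C. Then there exists a self-adjoint element Y ∈ A with q(Y) = y and ‖S^{−1/2} Y S^{1/2}‖ ≤ C. -/
/-!
Write `R = S^{1/2}`, `R' = R⁻¹`, and call `‖R' Y R‖` the weighted norm of `Y`; `q` has kernel `J`.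

If `c, d` are commuting self-adjoint elements with `c² + d² = 1`, `q c = 1`, `q d = 0`, then
`(X, Z) ↦ d X d + c Z c` preserves self-adjointness, takes a lift `Z` of `y` to a lift of `y`
whatever `X` is, and has norm at most `max ‖X‖ ‖Z‖` (`norm_glue_le`). When moreover `c` and `d`
almost commute with `R`, the same bound holds up to a small error for the weighted norm.

* Replacing a self-adjoint lift `Y` by `c Y c`, with `c` small on the part of `(R' Y R)(R' Y R)⋆`
  exceeding `C²`, gives lifts of weighted norm at most `C + η` for every `η > 0`
  (`exists_near_lift`).
* Given a lift `Y` of weighted norm at most `C + ε` and a lift `Z` of weighted norm at most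
  `C + η / 2`, put `Y' = d (sY) d + c Z c` with `s = C / (C + ε)`. This is a lift of weighted norm
  at most `C + η`, and it is within `O(ε)` of `Y` when `c, d` almost commute with `Y` and `c` is
  small on `Y - Z ∈ J` (`exists_improved_lift`). Iterating with `ε = 2⁻ⁿ` gives a Cauchy sequence,
  whose limit is the required lift.

The pair `c, d` comes from a quasicentral approximate unit of `J` (`exists_quasicentral`), through
the rational parametrization `c = (1 - e²)/(1 + e²)`, `d = 2e/(1 + e²)` of the circle. For
quasicentrality, an approximate unit `e` of `J` satisfies `φ (e a - a e) → 0` for each bounded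
functional `φ`, because `φ` vanishes asymptotically on `(1 - e) J` and `J (1 - e)`, uniformly on the
unit ball; Hahn–Banach separation then upgrades this to norm convergence of convex combinations.
-/

open Filter Topology

lemma q_real_smul {A B : Type*} [CStarAlgebra A] [CStarAlgebra B]
    (q : A →⋆ₐ[ℂ] B) (c : ℝ) (a : A) : q (c • a) = c • q a := by
  rw [← Complex.coe_smul, ← Complex.coe_smul, map_smul]

lemma continuous_q {A B : Type*} [CStarAlgebra A] [CStarAlgebra B]
    (q : A →⋆ₐ[ℂ] B) : Continuous q :=
  (AddMonoidHomClass.lipschitz_of_bound q 1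
    (fun a => by simpa using NonUnitalStarAlgHom.norm_apply_le q a)).continuous

section Helpers
variable {A B : Type*} [CStarAlgebra A] [PartialOrder A] [StarOrderedRing A]
    [CStarAlgebra B]

/-! ### Quasicentral approximate units of the kernel -/

/-- The canonical approximate unit of the C⋆-algebra `ker q`, pushed forward to `A`. -/
lemma exists_approxUnit_ker (q : A →⋆ₐ[ℂ] B) :
    ∃ l : Filter A, l.NeBot ∧ (∀ᶠ e in l, q e = 0 ∧ 0 ≤ e ∧ e ≤ 1) ∧
      ∀ b, q b = 0 → Tendsto (fun e => e * b) l (𝓝 b) := by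
  let J : NonUnitalStarSubalgebra ℂ A :=
    { carrier := {a | q a = 0}
      zero_mem' := map_zero q
      add_mem' := fun {a b} (ha : q a = 0) (hb : q b = 0) => by simp [ha, hb]
      mul_mem' := fun {a b} (ha : q a = 0) (hb : q b = 0) => by simp [ha]
      smul_mem' := fun c a (ha : q a = 0) => by simp [ha]
      star_mem' := fun {a} (ha : q a = 0) => by simp [map_star, ha] }
  have hq : Continuous q := continuous_q q
  have hclosed : IsClosed (J : Set A) := isClosed_eq hq continuous_const
  let _ : NonUnitalCStarAlgebra J :=
    NonUnitalStarSubalgebra.nonUnitalCStarAlgebra J (h_closed := hclosed)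
  let _ : PartialOrder J := CStarAlgebra.spectralOrder J
  have _ : StarOrderedRing J := CStarAlgebra.spectralOrderedRing J
  have hl := CStarAlgebra.increasingApproximateUnit J
  refine ⟨(CStarAlgebra.approximateUnit J).map (fun x : J => (x : A)), inferInstance, ?_, ?_⟩
  · rw [eventually_map]
    filter_upwards [hl.eventually_nonneg, hl.eventually_norm] with x hx hx1
    have h0 : (0 : A) ≤ (x : A) := by
      obtain ⟨z, hz⟩ := CStarAlgebra.nonneg_iff_eq_star_mul_self.mp hx
      rw [hz]
      exact star_mul_self_nonneg (z : A)
    exact ⟨x.2, h0, (CStarAlgebra.norm_le_one_iff_of_nonneg (x : A) h0).mp hx1⟩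
  · intro b hb
    rw [tendsto_map'_iff]
    have := hl.tendsto_mul_right ⟨b, hb⟩
    exact (continuous_subtype_val.tendsto _).comp this

lemma mul_one_sub_nonneg {f : A} (h0 : 0 ≤ f) (h1 : f ≤ 1) : 0 ≤ f * (1 - f) := by
  have hcompl : 0 ≤ 1 - f := sub_nonneg.mpr h1
  have : f * (1 - f) = f * (1 - f) * f + (1 - f) * f * (1 - f) := by noncomm_ring
  rw [this]
  exact add_nonneg (conjugate_nonneg_of_nonneg hcompl h0) (conjugate_nonneg_of_nonneg h0 hcompl)

/-- The row `(f, 1 - f)` is a contraction since `f² + (1 - f)² ≤ 1`. -/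
lemma norm_sq_row_le {f : A} (h0 : 0 ≤ f) (h1 : f ≤ 1) (x z : A) :
    ‖f * x + (1 - f) * z‖ ^ 2 ≤ ‖x‖ ^ 2 + ‖z‖ ^ 2 := by
  have hf : star f = f := (IsSelfAdjoint.of_nonneg h0).star_eq
  have key : star (f * x + (1 - f) * z) * (f * x + (1 - f) * z)
      = star x * x + star z * z - (star x * (1 - f) * x + star z * f * z
        + star (x - z) * (f * (1 - f)) * (x - z)) := by
    simp only [star_add, star_mul, star_sub, star_one, hf]
    noncomm_ring
  have h1' : 0 ≤ 1 - f := sub_nonneg.mpr h1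
  have hle : star (f * x + (1 - f) * z) * (f * x + (1 - f) * z) ≤ star x * x + star z * z := by
    rw [key]
    exact sub_le_self _ (add_nonneg (add_nonneg (star_left_conjugate_nonneg h1' _)
      (star_left_conjugate_nonneg h0 _))
      (star_left_conjugate_nonneg (mul_one_sub_nonneg h0 h1) _))
  calc ‖f * x + (1 - f) * z‖ ^ 2
      = ‖star (f * x + (1 - f) * z) * (f * x + (1 - f) * z)‖ := by
        rw [CStarRing.norm_star_mul_self, sq]
    _ ≤ ‖star x * x + star z * z‖ :=
        CStarAlgebra.norm_le_norm_of_nonneg_of_le (star_mul_self_nonneg _) hle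
    _ ≤ ‖star x * x‖ + ‖star z * z‖ := norm_add_le _ _
    _ = _ := by rw [CStarRing.norm_star_mul_self, CStarRing.norm_star_mul_self, sq, sq]

/-- A functional `φ` is small on `(1 - e) * z`, uniformly for `z` in the unit ball of `ker q`. If
`x` almost attains the norm `N` of `φ` on `ker q` then so does `e * x`, while `e * x + (1 - e) * (t • z)` has
norm at most `√(1 + t²)`; hence `N + t * φ ((1 - e) * z) ≤ N * √(1 + t²)` up to a small error, and
the right side exceeds `N` only to second order in `t`. -/
lemma eventually_functional_left (q : A →⋆ₐ[ℂ] B) {l : Filter A}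
    (hl : ∀ᶠ e in l, q e = 0 ∧ 0 ≤ e ∧ e ≤ 1)
    (hl' : ∀ b, q b = 0 → Tendsto (fun e => e * b) l (𝓝 b))
    (φ : StrongDual ℝ A) {δ : ℝ} (hδ : 0 < δ) :
    ∀ᶠ e in l, ∀ z, q z = 0 → ‖z‖ ≤ 1 → φ ((1 - e) * z) ≤ δ := by
  let J : Submodule ℝ A :=
    { carrier := {a | q a = 0}
      zero_mem' := map_zero q
      add_mem' := fun {a b} (ha : q a = 0) (hb : q b = 0) => by simp [ha, hb]
      smul_mem' := fun c a (ha : q a = 0) => by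
        simp [q_real_smul, ha] }
  let ψ : StrongDual ℝ J := φ.comp J.subtypeL
  set N : ℝ := ‖ψ‖ with hN
  have hN0 : 0 ≤ N := norm_nonneg ψ
  have hψ : ∀ w, q w = 0 → φ w ≤ N * ‖w‖ := fun w hw =>
    (le_abs_self _).trans (ψ.le_opNorm ⟨w, hw⟩)
  -- The parameter `t` balances `t * N / 2` against `γ / t`.
  set t : ℝ := δ / (N + 1) with ht
  have ht0 : 0 < t := by positivity
  set γ : ℝ := t * δ / 4 with hγ
  have hγ0 : 0 < γ := by positivity
  obtain ⟨x, hx1, hxN⟩ : ∃ x : J, ‖x‖ ≤ 1 ∧ N - γ < ψ x := by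
    obtain ⟨x, hx, hx'⟩ := ψ.exists_lt_apply_of_lt_opNorm (r := N - γ) (by linarith)
    rcases le_total 0 (ψ x) with h | h
    · exact ⟨x, hx.le, by rwa [Real.norm_of_nonneg h] at hx'⟩
    · exact ⟨-x, by simpa using hx.le, by rw [Real.norm_of_nonpos h] at hx'; simpa using hx'⟩
  have hx0 : q (x : A) = 0 := x.2
  have hx1' : ‖(x : A)‖ ≤ 1 := hx1
  have hlim : Tendsto (fun e => φ (e * (x : A))) l (𝓝 (φ x)) :=
    (φ.continuous.tendsto _).comp (hl' x hx0)
  have hev : ∀ᶠ e in l, N - γ < φ (e * (x : A)) := hlim.eventually (lt_mem_nhds hxN)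
  filter_upwards [hl, hev] with e ⟨he, he0, he1⟩ hex z hz hz1
  have hrow := norm_sq_row_le he0 he1 (x : A) (t • z)
  set w := e * (x : A) + (1 - e) * (t • z) with hw
  have hqw : q w = 0 := by simp [hw, he, q_real_smul, hz]
  have hφw : φ w = φ (e * (x : A)) + t * φ ((1 - e) * z) := by
    rw [hw, map_add, mul_smul_comm, map_smul, smul_eq_mul]
  have hwn : ‖w‖ ≤ 1 + t ^ 2 / 2 := by
    have h1 : ‖w‖ ^ 2 ≤ 1 + t ^ 2 := by
      refine hrow.trans ?_
      rw [norm_smul, Real.norm_of_nonneg ht0.le]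
      have : t * ‖z‖ ≤ t := by nlinarith
      have h2 : (t * ‖z‖) ^ 2 ≤ t ^ 2 := by gcongr
      have h3 : ‖(x : A)‖ ^ 2 ≤ 1 := by nlinarith [norm_nonneg (x : A)]
      linarith
    refine le_of_sq_le_sq ?_ (by positivity)
    nlinarith [sq_nonneg (t ^ 2)]
  have h4 := hψ w hqw
  have h5 : N * ‖w‖ ≤ N * (1 + t ^ 2 / 2) := by gcongr
  have h6 : t * φ ((1 - e) * z) ≤ γ + N * t ^ 2 / 2 := by linarith
  have h7 : N * t ≤ δ := by
    rw [ht, mul_div_assoc', div_le_iff₀ (by positivity)]; nlinarith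
  have h8 : γ + N * t ^ 2 / 2 ≤ t * δ := by
    rw [hγ]; nlinarith
  exact le_of_mul_le_mul_left (h6.trans h8) ht0

lemma eventually_functional_right (q : A →⋆ₐ[ℂ] B) {l : Filter A}
    (hl : ∀ᶠ e in l, q e = 0 ∧ 0 ≤ e ∧ e ≤ 1)
    (hl' : ∀ b, q b = 0 → Tendsto (fun e => e * b) l (𝓝 b))
    (φ : StrongDual ℝ A) {δ : ℝ} (hδ : 0 < δ) :
    ∀ᶠ e in l, ∀ z, q z = 0 → ‖z‖ ≤ 1 → φ (z * (1 - e)) ≤ δ := by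
  have := eventually_functional_left q hl hl'
    (φ.comp ((starL' ℝ : A ≃L[ℝ] A) : A →L[ℝ] A)) hδ
  filter_upwards [this, hl] with e he ⟨_, he0, _⟩ z hz hz1
  have hs : star e = e := (IsSelfAdjoint.of_nonneg he0).star_eq
  simpa [hs] using he (star z) (by simp [map_star, hz]) (by simpa using hz1)

/-- Weak quasicentrality: `e a - a e = e a (1 - e) - (1 - e) a e`, where `e a` and `a e` lie in
`ker q`. -/
lemma eventually_functional_commutator (q : A →⋆ₐ[ℂ] B) {l : Filter A}
    (hl : ∀ᶠ e in l, q e = 0 ∧ 0 ≤ e ∧ e ≤ 1)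
    (hl' : ∀ b, q b = 0 → Tendsto (fun e => e * b) l (𝓝 b))
    (φ : StrongDual ℝ A) (a : A) {δ : ℝ} (hδ : 0 < δ) :
    ∀ᶠ e in l, φ (e * a - a * e) ≤ δ := by
  set r : ℝ := (‖a‖ + 1)⁻¹ with hr
  have hr0 : 0 < r := by positivity
  filter_upwards [hl, eventually_functional_right q hl hl' φ (δ := r * δ / 2) (by positivity),
    eventually_functional_left q hl hl' (-φ) (δ := r * δ / 2) (by positivity)]
    with e ⟨he, he0, he1⟩ hR hL
  have hen : ‖e‖ ≤ 1 := (CStarAlgebra.norm_le_one_iff_of_nonneg e he0).mpr he1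
  have hra : ‖r • a‖ ≤ 1 := by
    rw [norm_smul, Real.norm_of_nonneg hr0.le, hr, inv_mul_le_one₀ (by positivity)]
    linarith
  have h1 := hR (e * (r • a)) (by simp [q_real_smul, he])
    ((norm_mul_le _ _).trans (mul_le_one₀ hen (norm_nonneg _) hra))
  have h2 := hL ((r • a) * e) (by simp [q_real_smul, he])
    ((norm_mul_le _ _).trans (mul_le_one₀ hra (norm_nonneg _) hen))
  have h3 : r * φ (e * a - a * e)
      = φ (e * (r • a) * (1 - e)) + (-φ) ((1 - e) * ((r • a) * e)) := by
    rw [neg_apply, ← sub_eq_add_neg, ← map_sub, ← smul_eq_mul, ← map_smul]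
    congr 1
    simp only [mul_smul_comm, smul_mul_assoc, ← smul_sub]
    congr 1
    noncomm_ring
  refine le_of_mul_le_mul_left ?_ hr0
  rw [h3]; linarith

/-- Quasicentral approximate units: the commutators and the defect `(1 - e) b` are affine in `e`, so by
Hahn–Banach separation weak convergence to `0` puts `0` in the norm closure of their values. -/
lemma exists_quasicentral (q : A →⋆ₐ[ℂ] B) (a₁ a₂ b : A) (hb : q b = 0) {ε : ℝ} (hε : 0 < ε) :
    ∃ e : A, q e = 0 ∧ 0 ≤ e ∧ e ≤ 1 ∧ ‖e * a₁ - a₁ * e‖ ≤ ε ∧ ‖e * a₂ - a₂ * e‖ ≤ ε ∧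
      ‖(1 - e) * b‖ ≤ ε := by
  obtain ⟨l, hne, hl, hl'⟩ := exists_approxUnit_ker q
  let D : Set A := {e | q e = 0 ∧ 0 ≤ e ∧ e ≤ 1}
  let F : A → A × A × A := fun e => (e * a₁ - a₁ * e, e * a₂ - a₂ * e, (1 - e) * b)
  have hconv : Convex ℝ (F '' D) := by
    rintro _ ⟨e, ⟨he, he0, he1⟩, rfl⟩ _ ⟨f, ⟨hf, hf0, hf1⟩, rfl⟩ s t hs ht hst
    refine ⟨s • e + t • f, ⟨?_, ?_, ?_⟩, ?_⟩
    · simp [q_real_smul, he, hf]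
    · exact add_nonneg (smul_nonneg hs he0) (smul_nonneg ht hf0)
    · calc s • e + t • f ≤ s • (1 : A) + t • (1 : A) :=
            add_le_add (smul_le_smul_of_nonneg_left he1 hs) (smul_le_smul_of_nonneg_left hf1 ht)
        _ = 1 := by rw [← add_smul, hst, one_smul]
    · have h1 : (1 : A) = s • 1 + t • 1 := by rw [← add_smul, hst, one_smul]
      simp only [F, Prod.smul_mk, Prod.mk_add_mk, Prod.mk.injEq]
      refine ⟨?_, ?_, ?_⟩
      · simp only [add_mul, mul_add, smul_mul_assoc, mul_smul_comm, smul_sub]; abel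
      · simp only [add_mul, mul_add, smul_mul_assoc, mul_smul_comm, smul_sub]; abel
      · rw [h1, ← smul_mul_assoc, ← smul_mul_assoc, ← add_mul, smul_sub, smul_sub]
        congr 1
        rw [← sub_eq_zero]
        simp only [← h1]
        rw [sub_eq_zero]
        nth_rewrite 1 [h1]
        abel
  have hmem : (0 : A × A × A) ∈ closure (F '' D) := by
    by_contra hnot
    obtain ⟨f, u, hfu, hK⟩ := geometric_hahn_banach_point_closed hconv.closure isClosed_closure hnot
    rw [map_zero] at hfu
    let φ₁ : StrongDual ℝ A := f.comp (ContinuousLinearMap.inl ℝ A (A × A))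
    let φ₂ : StrongDual ℝ A := (f.comp (ContinuousLinearMap.inr ℝ A (A × A))).comp
      (ContinuousLinearMap.inl ℝ A A)
    let φ₃ : StrongDual ℝ A := (f.comp (ContinuousLinearMap.inr ℝ A (A × A))).comp
      (ContinuousLinearMap.inr ℝ A A)
    have hf : ∀ x y z, f (x, y, z) = φ₁ x + φ₂ y + φ₃ z := by
      intro x y z
      simp only [φ₁, φ₂, φ₃, ContinuousLinearMap.comp_apply, ContinuousLinearMap.inl_apply,
        ContinuousLinearMap.inr_apply, ← map_add]
      simp
    have hlim : Tendsto (fun e => φ₃ ((1 - e) * b)) l (𝓝 0) := by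
      have : Tendsto (fun e => (1 - e) * b) l (𝓝 0) := by
        simpa [sub_mul] using (tendsto_const_nhds (x := b)).sub (hl' b hb)
      simpa [Function.comp_def] using (φ₃.continuous.tendsto _).comp this
    obtain ⟨e, heD, h1, h2, h3⟩ := (hl.and
      ((eventually_functional_commutator q hl hl' φ₁ a₁ (δ := u / 3) (by positivity)).and
      ((eventually_functional_commutator q hl hl' φ₂ a₂ (δ := u / 3) (by positivity)).and
      (hlim.eventually (gt_mem_nhds (show 0 < u / 3 by positivity)))))).exists
    have := hK (F e) (subset_closure ⟨e, heD, rfl⟩)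
    rw [hf] at this
    linarith
  obtain ⟨_, ⟨e, ⟨he, he0, he1⟩, rfl⟩, hlt⟩ := Metric.mem_closure_iff.mp hmem ε hε
  rw [dist_zero_left] at hlt
  have := (norm_prod_le_iff.mp hlt.le)
  exact ⟨e, he, he0, he1, this.1, (norm_prod_le_iff.mp this.2).1, (norm_prod_le_iff.mp this.2).2⟩

/-! ### Quasicentral partitions and gluing -/

/-- A quasicentral partition `c² + d² = 1` subordinate to `ker q`. With `g = (1 + e²)⁻¹` it is
`c = 2g - 1 = (1 - e²) g` and `d = 2ge`; a rational choice makes the commutators with `c` and `d`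
explicitly controlled by those with `e`. -/
lemma exists_cutoff (q : A →⋆ₐ[ℂ] B) (a₁ a₂ b : A) (hb : q b = 0) {ε : ℝ} (hε : 0 < ε) :
    ∃ c d : A, IsSelfAdjoint c ∧ IsSelfAdjoint d ∧ c * d = d * c ∧ c * c + d * d = 1 ∧
      q c = 1 ∧ q d = 0 ∧ ‖c * a₁ - a₁ * c‖ ≤ ε ∧ ‖c * a₂ - a₂ * c‖ ≤ ε ∧
      ‖d * a₁ - a₁ * d‖ ≤ ε ∧ ‖d * a₂ - a₂ * d‖ ≤ ε ∧ ‖c * b‖ ≤ ε := by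
  obtain ⟨e, he, he0, he1, h1, h2, h3⟩ :=
    exists_quasicentral q a₁ a₂ b hb (ε := ε / 6) (by positivity)
  have hen : ‖e‖ ≤ 1 := (CStarAlgebra.norm_le_one_iff_of_nonneg e he0).mpr he1
  have hes : IsSelfAdjoint e := .of_nonneg he0
  have hee : 0 ≤ e * e := by simpa [hes.star_eq] using star_mul_self_nonneg e
  have hu : IsUnit (1 + e * e) :=
    CStarAlgebra.isUnit_of_le 1 (le_add_of_nonneg_right hee)
  obtain ⟨u, hu⟩ := hu
  set g : A := ((u⁻¹ : Aˣ) : A) with hg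
  have hg1 : (1 + e * e) * g = 1 := by rw [← hu]; simp [hg]
  have hg2 : g * (1 + e * e) = 1 := by rw [← hu]; simp [hg]
  have hge : Commute g e := by
    have : Commute (u : A) e := by
      rw [hu]; exact (Commute.one_left e).add_left ((Commute.refl e).mul_left (Commute.refl e))
    exact this.units_inv_left
  have hgs : IsSelfAdjoint g := by
    have h : star g * (1 + e * e) = 1 := by
      have := congrArg star hg1
      simpa [hes.star_eq] using this
    calc star g = star g * ((1 + e * e) * g) := by rw [hg1, mul_one]
      _ = g := by rw [← mul_assoc, h, one_mul]
  have hgn : ‖g‖ ≤ 1 := by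
    have hgg : g * g + star (e * g) * (e * g) = g := by
      rw [star_mul, hgs.star_eq, hes.star_eq]
      calc g * g + g * e * (e * g) = g * ((1 + e * e) * g) := by noncomm_ring
        _ = g := by rw [hg1, mul_one]
    have hle : star g * g ≤ g := by
      rw [hgs.star_eq]
      nth_rewrite 3 [← hgg]
      exact le_add_of_nonneg_right (star_mul_self_nonneg _)
    have h := CStarAlgebra.norm_le_norm_of_nonneg_of_le (star_mul_self_nonneg g) hle
    rw [CStarRing.norm_star_mul_self] at h
    by_contra! hlt
    nlinarith
  have hgcomm : ∀ a, ‖e * a - a * e‖ ≤ ε / 6 → ‖g * a - a * g‖ ≤ 2 * (ε / 6) := by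
    intro a ha
    have hid : g * a - a * g = -(g * (e * (e * a - a * e) + (e * a - a * e) * e) * g) := by
      calc g * a - a * g = g * a * ((1 + e * e) * g) - g * (1 + e * e) * a * g := by
            rw [hg1, hg2]; simp
        _ = _ := by noncomm_ring
    rw [hid, norm_neg]
    calc _ ≤ ‖g‖ * (‖e‖ * ‖e * a - a * e‖ + ‖e * a - a * e‖ * ‖e‖) * ‖g‖ := by
          refine (norm_mul_le _ _).trans ?_
          gcongr
          refine (norm_mul_le _ _).trans ?_
          gcongr
          exact (norm_add_le _ _).trans (add_le_add (norm_mul_le _ _) (norm_mul_le _ _))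
      _ ≤ 1 * (1 * (ε / 6) + (ε / 6) * 1) * 1 := by gcongr
      _ = _ := by ring
  have hccomm : ∀ a, ‖e * a - a * e‖ ≤ ε / 6 →
      ‖(g + g - 1) * a - a * (g + g - 1)‖ ≤ ε := by
    intro a ha
    have hid : (g + g - 1) * a - a * (g + g - 1) = (g * a - a * g) + (g * a - a * g) := by
      noncomm_ring
    rw [hid]
    refine (norm_add_le _ _).trans ?_
    linarith [hgcomm a ha]
  have hdcomm : ∀ a, ‖e * a - a * e‖ ≤ ε / 6 →
      ‖(g * e + g * e) * a - a * (g * e + g * e)‖ ≤ ε := by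
    intro a ha
    have hid : (g * e + g * e) * a - a * (g * e + g * e)
        = (g * (e * a - a * e) + (g * a - a * g) * e)
          + (g * (e * a - a * e) + (g * a - a * g) * e) := by
      noncomm_ring
    have h : ‖g * (e * a - a * e) + (g * a - a * g) * e‖ ≤ 1 * (ε / 6) + 2 * (ε / 6) * 1 := by
      refine (norm_add_le _ _).trans (add_le_add ?_ ?_)
      · refine (norm_mul_le _ _).trans ?_
        gcongr
      · refine (norm_mul_le _ _).trans ?_
        gcongr
        exact hgcomm a ha
    rw [hid]
    refine (norm_add_le _ _).trans ?_
    linarith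
  have hqg : q g = 1 := by
    have := congrArg q hg1
    simpa [he] using this
  have hgs' := hgs.star_eq
  refine ⟨g + g - 1, g * e + g * e, ?_, ?_, ?_, ?_, ?_, ?_, hccomm _ h1, hccomm _ h2,
    hdcomm _ h1, hdcomm _ h2, ?_⟩
  · exact (hgs.add hgs).sub (.one A)
  · have : IsSelfAdjoint (g * e) := by
      rw [IsSelfAdjoint, star_mul, hgs', hes.star_eq, hge.eq]
    exact this.add this
  · have h : Commute g (g * e) := (Commute.refl g).mul_right hge
    have h' : Commute g (g * e + g * e) := h.add_right h
    exact ((h'.add_left h').sub_left (Commute.one_left _)).eq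
  · -- `(2g - 1)² + (2ge)² = 4g²(1 + e²) - 4g + 1`
    have h : g * e * (g * e) = g * (g * (1 + e * e)) - g * g := by
      rw [mul_assoc, ← mul_assoc e g e, ← hge.eq]; noncomm_ring
    rw [hg2, mul_one] at h
    simp only [add_mul, mul_add, sub_mul, mul_sub, h]
    noncomm_ring
  · rw [map_sub, map_add, hqg, map_one]; abel
  · simp [he]
  · have hid : (g + g - 1) * b = g * ((1 + e) * ((1 - e) * b)) := by
      calc (g + g - 1) * b = (g + g - g * (1 + e * e)) * b := by rw [hg2]
        _ = _ := by noncomm_ring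
    have h1e : ‖(1 + e) * ((1 - e) * b)‖ ≤ ε / 6 + 1 * (ε / 6) := by
      rw [add_mul, one_mul]
      refine (norm_add_le _ _).trans (add_le_add h3 ((norm_mul_le _ _).trans ?_))
      gcongr
    rw [hid]
    calc _ ≤ ‖g‖ * ‖(1 + e) * ((1 - e) * b)‖ := norm_mul_le _ _
      _ ≤ 1 * (ε / 6 + 1 * (ε / 6)) := by gcongr
      _ ≤ ε := by linarith

lemma norm_le_one_of_sq_add {c d : A} (hc : IsSelfAdjoint c) (hd : IsSelfAdjoint d)
    (h : c * c + d * d = 1) : ‖c‖ ≤ 1 := by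
  have hle : star c * c ≤ 1 := by
    rw [← h, hc.star_eq]
    exact le_add_of_nonneg_right (by simpa [hd.star_eq] using star_mul_self_nonneg d)
  have := (CStarAlgebra.norm_le_one_iff_of_nonneg _ (star_mul_self_nonneg c)).mpr hle
  rw [CStarRing.norm_star_mul_self] at this
  by_contra! hlt
  nlinarith

/-- With `v₁ = x d` and `v₂ = z c`, the identity
`|d v₁ + c v₂|² = |v₁|² + |v₂|² - |c v₁ - d v₂|²` bounds the left side by `M² (d² + c²) = M²`. -/
lemma norm_glue_le {c d : A} (hc : IsSelfAdjoint c) (hd : IsSelfAdjoint d) (hcd : c * d = d * c)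
    (h : c * c + d * d = 1) {x z : A} {M : ℝ} (hM : 0 ≤ M) (hx : ‖x‖ ≤ M) (hz : ‖z‖ ≤ M) :
    ‖d * x * d + c * z * c‖ ≤ M := by
  have aux : ∀ w v : A, IsSelfAdjoint v → ‖w‖ ≤ M →
      star (w * v) * (w * v) ≤ (M ^ 2) • (v * v) := by
    intro w v hv hw
    have h1 : star w * w ≤ algebraMap ℝ A (M ^ 2) :=
      CStarAlgebra.star_mul_le_algebraMap_norm_sq.trans
        (algebraMap_mono A (by gcongr))
    have h2 := star_left_conjugate_le_conjugate h1 v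
    rw [hv.star_eq] at h2
    calc star (w * v) * (w * v) = v * (star w * w) * v := by
          rw [star_mul, hv.star_eq]; noncomm_ring
      _ ≤ _ := h2
      _ = _ := by rw [Algebra.algebraMap_eq_smul_one]; simp
  set v₁ := x * d
  set v₂ := z * c
  have hdd : d * d = 1 - c * c := by rw [← h]; abel
  have key : star (d * v₁ + c * v₂) * (d * v₁ + c * v₂)
      = star v₁ * v₁ + star v₂ * v₂ - star (c * v₁ - d * v₂) * (c * v₁ - d * v₂) := by
    simp only [star_add, star_sub, star_mul, hc.star_eq, hd.star_eq]
    have e1 : star v₁ * v₁ = star v₁ * (c * c + d * d) * v₁ := by rw [h, mul_one]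
    have e2 : star v₂ * v₂ = star v₂ * (c * c + d * d) * v₂ := by rw [h, mul_one]
    have e3 : star v₁ * c * (d * v₂) = star v₁ * d * (c * v₂) := by
      rw [mul_assoc, ← mul_assoc c, hcd]; noncomm_ring
    have e4 : star v₂ * d * (c * v₁) = star v₂ * c * (d * v₁) := by
      rw [mul_assoc, ← mul_assoc d, ← hcd]; noncomm_ring
    rw [e1, e2]
    simp only [add_mul, mul_add, sub_mul, mul_sub, e3, e4]
    noncomm_ring
  have hle : star (d * v₁ + c * v₂) * (d * v₁ + c * v₂) ≤ algebraMap ℝ A (M ^ 2) := by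
    rw [key]
    calc _ ≤ star v₁ * v₁ + star v₂ * v₂ := sub_le_self _ (star_mul_self_nonneg _)
      _ ≤ (M ^ 2) • (d * d) + (M ^ 2) • (c * c) := add_le_add (aux x d hd hx) (aux z c hc hz)
      _ = algebraMap ℝ A (M ^ 2) := by
        rw [← smul_add, add_comm, h, Algebra.algebraMap_eq_smul_one]
  have h3 := (CStarAlgebra.norm_le_iff_le_algebraMap _ (sq_nonneg M)
    (star_mul_self_nonneg _)).mpr hle
  rw [CStarRing.norm_star_mul_self, ← sq] at h3
  have := le_of_sq_le_sq h3 hM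
  simpa [v₁, v₂, mul_assoc] using this


/-! ### Lifts with control of the weighted norm -/

/-- Conjugation by `R` commutes with compression by `c`, up to the size of the commutator of `c` and
`R`. -/
lemma norm_conj_sub_le {A : Type*} [CStarAlgebra A] {R R' : A} (h1 : R * R' = 1) (h2 : R' * R = 1) (Y : A) {c : A}
    (hc : ‖c‖ ≤ 1) {θ : ℝ} (hcR : ‖c * R - R * c‖ ≤ θ) :
    ‖R' * (c * Y * c) * R - c * (R' * Y * R) * c‖
      ≤ (‖R'‖ * ‖R'‖ * ‖R‖ + ‖R'‖) * ‖Y‖ * θ := by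
  have hθ : 0 ≤ θ := (norm_nonneg _).trans hcR
  have hR' : R' * c - c * R' = R' * (c * R - R * c) * R' := by
    have e1 : R' * c * (R * R') = R' * c := by rw [h1, mul_one]
    have e2 : R' * R * c * R' = c * R' := by rw [h2, one_mul]
    calc R' * c - c * R' = R' * c * (R * R') - R' * R * c * R' := by rw [e1, e2]
      _ = _ := by noncomm_ring
  have hid : R' * (c * Y * c) * R - c * (R' * Y * R) * c
      = R' * (c * R - R * c) * R' * (Y * c * R) + c * R' * Y * (c * R - R * c) := by
    rw [← hR']; noncomm_ring
  rw [hid]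
  have n1 : ‖R' * (c * R - R * c) * R' * (Y * c * R)‖
      ≤ ‖R'‖ * θ * ‖R'‖ * (‖Y‖ * 1 * ‖R‖) := by
    refine (norm_mul_le _ _).trans ?_
    gcongr
    · refine (norm_mul_le _ _).trans ?_
      gcongr
      refine (norm_mul_le _ _).trans ?_
      gcongr
    · refine (norm_mul_le _ _).trans ?_
      gcongr
      refine (norm_mul_le _ _).trans ?_
      gcongr
  have n2 : ‖c * R' * Y * (c * R - R * c)‖ ≤ 1 * ‖R'‖ * ‖Y‖ * θ := by
    refine (norm_mul_le _ _).trans ?_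
    gcongr
    refine (norm_mul_le _ _).trans ?_
    gcongr
    refine (norm_mul_le _ _).trans ?_
    gcongr
  refine (norm_add_le _ _).trans ((add_le_add n1 n2).trans (le_of_eq ?_))
  ring

/-- The part of `T T⋆` exceeding `C²`, namely `b = (T T⋆ - C²)⁺`, dies in the quotient. -/
lemma exists_excess (q : A →⋆ₐ[ℂ] B) (T : A) {C : ℝ} (hT : ‖q T‖ ≤ C) :
    ∃ b : A, q b = 0 ∧ T * star T ≤ algebraMap ℝ A (C ^ 2) + b := by
  let _ : PartialOrder B := CStarAlgebra.spectralOrder B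
  have _ : StarOrderedRing B := CStarAlgebra.spectralOrderedRing B
  set p : A := T * star T - algebraMap ℝ A (C ^ 2) with hp
  have hps : IsSelfAdjoint p :=
    (IsSelfAdjoint.mul_star_self T).sub (IsSelfAdjoint.algebraMap A (.all _))
  have hqp : q p = q T * star (q T) - algebraMap ℝ B (C ^ 2) := by
    rw [hp, map_sub, map_mul, map_star, Algebra.algebraMap_eq_smul_one, q_real_smul, map_one,
      ← Algebra.algebraMap_eq_smul_one]
  have hqp0 : q p ≤ 0 := by
    rw [hqp, sub_nonpos]
    exact CStarAlgebra.mul_star_le_algebraMap_norm_sq.trans (algebraMap_mono B (by gcongr))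
  refine ⟨p⁺, ?_, ?_⟩
  · have hmap : q p⁺ = (q p)⁺ := by
      rw [CFC.posPart_def, CFC.posPart_def]
      exact NonUnitalStarAlgHomClass.map_cfcₙ (S := ℂ) q _ p (hφ := continuous_q q)
        (hφa := hps.map q)
    rw [hmap, CFC.posPart_eq_zero_iff _ (hps.map q)]
    exact hqp0
  · have := CFC.le_posPart (a := p) hps
    rw [hp, sub_le_iff_le_add'] at this
    exact this

/-- Lifts whose weighted norm exceeds `C` by an arbitrarily small amount. -/
lemma exists_near_lift (q : A →⋆ₐ[ℂ] B) (hq : Function.Surjective q) {R R' : A}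
    (h1 : R * R' = 1) (h2 : R' * R = 1) {C : ℝ} (hC : 0 ≤ C) {y : B} (hy : IsSelfAdjoint y)
    (hnorm : ‖q R' * y * q R‖ ≤ C) {η : ℝ} (hη : 0 < η) :
    ∃ Z : A, IsSelfAdjoint Z ∧ q Z = y ∧ ‖R' * Z * R‖ ≤ C + η := by
  obtain ⟨a, rfl⟩ := hq y
  set Y : A := (1 / 2 : ℝ) • (a + star a) with hY
  have hYs : IsSelfAdjoint Y := IsSelfAdjoint.smul (.all _) (.add_star_self a)
  have hqY : q Y = q a := by
    rw [hY, q_real_smul, map_add, map_star, hy.star_eq, ← two_smul ℝ, smul_smul]; norm_num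
  rw [← hqY] at hnorm ⊢
  set T := R' * Y * R with hT
  obtain ⟨b, hb, hbT⟩ := exists_excess q T (by simpa [hT] using hnorm)
  set K : ℝ := (‖R'‖ * ‖R'‖ * ‖R‖ + ‖R'‖) * ‖Y‖ with hK
  have hK0 : 0 ≤ K := by positivity
  set θ : ℝ := min ((η / 2) ^ 2) (η / 2 / (K + 1)) with hθ
  have hθ0 : 0 < θ := by positivity
  have hKθ : K * θ ≤ η / 2 := by
    calc K * θ ≤ (K + 1) * (η / 2 / (K + 1)) := by
          gcongr
          · linarith
          · exact min_le_right _ _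
      _ = η / 2 := by field_simp
  obtain ⟨c, d, hc, hd, -, hcd, hqc, -, hcR, -, -, -, hcb⟩ := exists_cutoff q R R b hb hθ0
  have hcn := norm_le_one_of_sq_add hc hd hcd
  have hcT : ‖c * T‖ ≤ C + η / 2 := by
    have hle : c * T * star (c * T) ≤ algebraMap ℝ A (C ^ 2) + c * b * c := by
      calc c * T * star (c * T) = star c * (T * star T) * c := by
            rw [star_mul, hc.star_eq]; noncomm_ring
        _ ≤ star c * (algebraMap ℝ A (C ^ 2) + b) * c := star_left_conjugate_le_conjugate hbT c
        _ = (C ^ 2) • (c * c) + c * b * c := by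
            rw [hc.star_eq, Algebra.algebraMap_eq_smul_one]; simp [mul_add, add_mul]
        _ ≤ _ := by
            rw [Algebra.algebraMap_eq_smul_one]
            gcongr
            rw [← hcd]
            exact le_add_of_nonneg_right (by simpa [hd.star_eq] using star_mul_self_nonneg d)
    have hn := CStarAlgebra.norm_le_norm_of_nonneg_of_le (mul_star_self_nonneg _) hle
    rw [CStarRing.norm_self_mul_star] at hn
    have hal : ‖algebraMap ℝ A (C ^ 2)‖ ≤ C ^ 2 := by
      rcases subsingleton_or_nontrivial A with hA | hA
      · rw [Subsingleton.elim (algebraMap ℝ A (C ^ 2)) 0, norm_zero]; positivity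
      rw [norm_algebraMap', Real.norm_of_nonneg (sq_nonneg C)]
    have hcbc : ‖c * b * c‖ ≤ (η / 2) ^ 2 := by
      calc ‖c * b * c‖ ≤ ‖c * b‖ * ‖c‖ := norm_mul_le _ _
        _ ≤ θ * 1 := by gcongr
        _ ≤ _ := by rw [mul_one]; exact min_le_left _ _
    have h3 := norm_add_le (algebraMap ℝ A (C ^ 2)) (c * b * c)
    refine le_of_sq_le_sq ?_ (by positivity)
    nlinarith
  have hcTc : ‖c * T * c‖ ≤ C + η / 2 := by
    calc ‖c * T * c‖ ≤ ‖c * T‖ * ‖c‖ := norm_mul_le _ _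
      _ ≤ ‖c * T‖ * 1 := by gcongr
      _ ≤ _ := by rw [mul_one]; exact hcT
  refine ⟨c * Y * c, hYs.conjugate_self hc, by simp [hqc], ?_⟩
  have h4 := norm_conj_sub_le h1 h2 Y hcn hcR
  have h5 := norm_le_norm_add_norm_sub' (R' * (c * Y * c) * R) (c * T * c)
  rw [← hT] at h4
  linarith

/-- The correction step: the distance moved is governed by the old excess `ε`, whereas the new excess
`η` is arbitrary. -/
lemma exists_improved_lift (q : A →⋆ₐ[ℂ] B) (hq : Function.Surjective q) {R R' : A}
    (h1 : R * R' = 1) (h2 : R' * R = 1) {C : ℝ} (hC : 0 ≤ C) {y : B} (hy : IsSelfAdjoint y)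
    (hnorm : ‖q R' * y * q R‖ ≤ C) {ε η : ℝ} (hε : 0 < ε) (hη : 0 < η)
    {Y : A} (hY : IsSelfAdjoint Y) (hqY : q Y = y) (hYn : ‖R' * Y * R‖ ≤ C + ε) :
    ∃ Y' : A, IsSelfAdjoint Y' ∧ q Y' = y ∧ ‖R' * Y' * R‖ ≤ C + η ∧
      ‖Y - Y'‖ ≤ (‖R‖ * ‖R'‖ + 1) * ε := by
  obtain ⟨Z, hZ, hqZ, hZn⟩ := exists_near_lift q hq h1 h2 hC hy hnorm (half_pos hη)
  have hCε : 0 < C + ε := by linarith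
  set s : ℝ := C / (C + ε) with hs
  have hs0 : 0 ≤ s := by positivity
  have hs1 : (1 - s) * (C + ε) = ε := by rw [hs]; field_simp; ring
  have hs2 : s * (C + ε) = C := by rw [hs]; field_simp
  have hs3 : 0 ≤ 1 - s := by
    by_contra! h
    nlinarith
  set L : ℝ := ‖R'‖ * ‖R'‖ * ‖R‖ + ‖R'‖ with hL
  set K : ℝ := L * ‖s • Y‖ + L * ‖Z‖ with hK
  have hK0 : 0 ≤ K := by positivity
  set θ : ℝ := min (ε / 3) (η / 2 / (K + 1)) with hθ
  have hθ0 : 0 < θ := by positivity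
  have hθ3 : θ ≤ ε / 3 := min_le_left _ _
  have hKθ : K * θ ≤ η / 2 := by
    calc K * θ ≤ (K + 1) * (η / 2 / (K + 1)) := by
          gcongr
          · linarith
          · exact min_le_right _ _
      _ = η / 2 := by field_simp
  obtain ⟨c, d, hc, hd, hcomm, hcd, hqc, hqd, hcR, hcY, hdR, hdY, hcb⟩ :=
    exists_cutoff q R Y (Y - Z) (by simp [hqY, hqZ]) hθ0
  have hcn := norm_le_one_of_sq_add hc hd hcd
  have hdn := norm_le_one_of_sq_add hd hc (by rw [add_comm]; exact hcd)
  have hYnorm : ‖Y‖ ≤ ‖R‖ * (C + ε) * ‖R'‖ := by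
    have : Y = R * (R' * Y * R) * R' := by
      calc Y = (R * R') * Y * (R * R') := by rw [h1]; simp
        _ = _ := by noncomm_ring
    calc ‖Y‖ = ‖R * (R' * Y * R) * R'‖ := by rw [← this]
      _ ≤ ‖R * (R' * Y * R)‖ * ‖R'‖ := norm_mul_le _ _
      _ ≤ ‖R‖ * ‖R' * Y * R‖ * ‖R'‖ := by gcongr; exact norm_mul_le _ _
      _ ≤ _ := by gcongr
  refine ⟨d * (s • Y) * d + c * Z * c, ?_, ?_, ?_, ?_⟩
  · exact ((IsSelfAdjoint.smul (.all s) hY).conjugate_self hd).add (hZ.conjugate_self hc)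
  · simp [hqc, hqd, hqZ, q_real_smul]
  · have e1 := norm_conj_sub_le h1 h2 (s • Y) hdn hdR
    have e2 := norm_conj_sub_le h1 h2 Z hcn hcR
    have e3 : ‖R' * (s • Y) * R‖ ≤ C + η / 2 := by
      rw [mul_smul_comm, smul_mul_assoc, norm_smul, Real.norm_of_nonneg hs0]
      have : s * ‖R' * Y * R‖ ≤ s * (C + ε) := by gcongr
      linarith
    have e4 := norm_glue_le hc hd hcomm hcd (by positivity) e3 hZn
    have hid : R' * (d * (s • Y) * d + c * Z * c) * R
        = (d * (R' * (s • Y) * R) * d + c * (R' * Z * R) * c)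
          + ((R' * (d * (s • Y) * d) * R - d * (R' * (s • Y) * R) * d)
          + (R' * (c * Z * c) * R - c * (R' * Z * R) * c)) := by
      rw [mul_add, add_mul]; abel
    rw [hid]
    refine (norm_add_le _ _).trans ?_
    have e5 := norm_add_le (R' * (d * (s • Y) * d) * R - d * (R' * (s • Y) * R) * d)
      (R' * (c * Z * c) * R - c * (R' * Z * R) * c)
    have e6 : K * θ = L * ‖s • Y‖ * θ + L * ‖Z‖ * θ := by rw [hK]; ring
    linarith
  · have hid : Y - (d * (s • Y) * d + c * Z * c)
        = (1 - s) • (d * Y * d) + d * (d * Y - Y * d) + c * (c * Y - Y * c)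
          + c * (Y - Z) * c := by
      have : Y = (c * c + d * d) * Y := by rw [hcd, one_mul]
      nth_rewrite 1 [this]
      simp only [mul_smul_comm, smul_mul_assoc, sub_smul, one_smul]
      noncomm_ring
    have n1 : ‖(1 - s) • (d * Y * d)‖ ≤ ‖R‖ * ‖R'‖ * ε := by
      rw [norm_smul, Real.norm_of_nonneg hs3]
      have : ‖d * Y * d‖ ≤ ‖R‖ * (C + ε) * ‖R'‖ := by
        calc ‖d * Y * d‖ ≤ ‖d * Y‖ * ‖d‖ := norm_mul_le _ _
          _ ≤ ‖d‖ * ‖Y‖ * ‖d‖ := by gcongr; exact norm_mul_le _ _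
          _ ≤ 1 * ‖Y‖ * 1 := by gcongr
          _ ≤ _ := by linarith
      calc (1 - s) * ‖d * Y * d‖ ≤ (1 - s) * (‖R‖ * (C + ε) * ‖R'‖) := by gcongr
        _ = ‖R‖ * ‖R'‖ * ((1 - s) * (C + ε)) := by ring
        _ = _ := by rw [hs1]
    have n2 : ‖d * (d * Y - Y * d)‖ ≤ 1 * θ := (norm_mul_le _ _).trans (by gcongr)
    have n3 : ‖c * (c * Y - Y * c)‖ ≤ 1 * θ := (norm_mul_le _ _).trans (by gcongr)
    have n4 : ‖c * (Y - Z) * c‖ ≤ θ * 1 := (norm_mul_le _ _).trans (by gcongr)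
    rw [hid]
    refine (norm_add_le _ _).trans ?_
    have n5 := norm_add_le ((1 - s) • (d * Y * d) + d * (d * Y - Y * d)) (c * (c * Y - Y * c))
    have n6 := norm_add_le ((1 - s) • (d * Y * d)) (d * (d * Y - Y * d))
    linarith

lemma exists_exact_lift (q : A →⋆ₐ[ℂ] B) (hq : Function.Surjective q) {R R' : A}
    (h1 : R * R' = 1) (h2 : R' * R = 1) {C : ℝ} (hC : 0 ≤ C) {y : B} (hy : IsSelfAdjoint y)
    (hnorm : ‖q R' * y * q R‖ ≤ C) :
    ∃ Y : A, IsSelfAdjoint Y ∧ q Y = y ∧ ‖R' * Y * R‖ ≤ C := by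
  obtain ⟨Y₀, hY₀⟩ := exists_near_lift q hq h1 h2 hC hy hnorm one_pos
  let P : ℕ → A → Prop := fun n Y =>
    IsSelfAdjoint Y ∧ q Y = y ∧ ‖R' * Y * R‖ ≤ C + (1 / 2) ^ n
  have hstep : ∀ n Y, ∃ Y', P n Y → P (n + 1) Y' ∧
      ‖Y - Y'‖ ≤ (‖R‖ * ‖R'‖ + 1) * (1 / 2) ^ n := by
    intro n Y
    by_cases hP : P n Y
    · obtain ⟨Y', a1, a2, a3, a4⟩ := exists_improved_lift q hq h1 h2 hC hy hnorm
        (ε := (1 / 2) ^ n) (η := (1 / 2) ^ (n + 1)) (by positivity) (by positivity)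
        hP.1 hP.2.1 hP.2.2
      exact ⟨Y', fun _ => ⟨⟨a1, a2, a3⟩, a4⟩⟩
    · exact ⟨0, fun h => absurd h hP⟩
  choose F hF using hstep
  let u : ℕ → A := fun n => Nat.rec Y₀ F n
  have hu : ∀ n, P n (u n) := by
    intro n
    induction n with
    | zero => exact ⟨hY₀.1, hY₀.2.1, by simpa [u] using hY₀.2.2⟩
    | succ n ih => exact (hF n _ ih).1
  have hcau : CauchySeq u := by
    refine cauchySeq_of_le_geometric (1 / 2) (‖R‖ * ‖R'‖ + 1) (by norm_num) fun n => ?_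
    rw [dist_eq_norm]
    exact (hF n _ (hu n)).2
  obtain ⟨Y, hY⟩ := cauchySeq_tendsto_of_complete hcau
  refine ⟨Y, ?_, ?_, ?_⟩
  · exact tendsto_nhds_unique ((continuous_star.tendsto Y).comp hY)
      (hY.congr fun n => (hu n).1.star_eq.symm)
  · exact tendsto_nhds_unique (((continuous_q q).tendsto Y).comp hY)
      (tendsto_const_nhds.congr fun n => (hu n).2.1.symm)
  · have hcont : Continuous fun X : A => ‖R' * X * R‖ := by fun_prop
    have hlim : Tendsto (fun n : ℕ => C + (1 / 2 : ℝ) ^ n) atTop (𝓝 (C + 0)) :=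
      tendsto_const_nhds.add
        (tendsto_pow_atTop_nhds_zero_of_lt_one (by norm_num) (by norm_num))
    rw [add_zero] at hlim
    exact le_of_tendsto_of_tendsto' ((hcont.tendsto Y).comp hY) hlim fun n => (hu n).2.2

end Helpers

/-- Let `A` be a unital C*-algebra, `I` a closed two-sided ideal with
quotient map `q : A → A/I` (encoded as a surjective unital star algebra homomorphism onto
a C*-algebra `B`), `S ∈ A` positive invertible with image `s = q S`, `C ≥ 0`, and
`y ∈ B` self-adjoint with `‖s^{-1/2} y s^{1/2}‖ ≤ C`. Then `y` has a self-adjoint lift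
`Y ∈ A` with `‖S^{-1/2} Y S^{1/2}‖ ≤ C`. Here `S^{1/2} = CFC.sqrt S` is the positive
square root given by continuous functional calculus, `S^{-1/2}` is its inverse, and
`s^{±1/2} = q (S^{±1/2})`. -/
theorem stmt_13 {A B : Type*} [CStarAlgebra A] [PartialOrder A] [StarOrderedRing A]
    [CStarAlgebra B] [PartialOrder B] [StarOrderedRing B]
    (q : A →⋆ₐ[ℂ] B) (hq : Function.Surjective q)
    (S : A) (hS_pos : 0 ≤ S) (hS_inv : IsUnit S)
    (C : ℝ) (hC : 0 ≤ C)
    (y : B) (hy : IsSelfAdjoint y)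
    (hnorm : ‖q (Ring.inverse (CFC.sqrt S)) * y * q (CFC.sqrt S)‖ ≤ C) :
    ∃ Y : A, IsSelfAdjoint Y ∧ q Y = y ∧
      ‖Ring.inverse (CFC.sqrt S) * Y * CFC.sqrt S‖ ≤ C := by
  have hu : IsUnit (CFC.sqrt S) := (CFC.isUnit_sqrt_iff S hS_pos).mpr hS_inv
  exact exists_exact_lift q hq (Ring.mul_inverse_cancel _ hu) (Ring.inverse_mul_cancel _ hu)
    hC hy hnorm
end

section
/- Let A be a unital C*-algebra and b ∈ A an algebraic element whose minimal polynomial is p(t) = (t−λ₁)^{k₁}⋯(t−λₙ)^{kₙ} with distinct λ₁,…,λₙ ∈ ℂ. Let e₁,…,eₙ ∈ A be the spectral idempotents of b, i.e. idempotents with eᵢeⱼ = 0 for i ≠ j, Σᵢ eᵢ = 1, b eᵢ = eᵢ b, and (b−λᵢ)^{kᵢ} eᵢ = 0 for each i. Then: (a) s = Σᵢ eᵢ* eᵢ is positive and invertible in A; (b) the elements pᵢ = s^{1/2} eᵢ s^{−1/2} are projections (pᵢ = pᵢ* = pᵢ²) with Σᵢ pᵢ = 1; and (c) setting c = s^{1/2}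 b s^{−1/2}, one has pᵢ (c−λᵢ)^{kᵢ} pᵢ = 0 for each i and Σᵢ pᵢ c pᵢ = c. -/
/-!
Write `s = ∑ eᵢ* eᵢ`. Positivity is clear; invertibility comes from the Cauchy–Schwarz type identity
`2 n s = 2 (∑ eᵢ)* (∑ eᵢ) + ∑ᵢⱼ (eᵢ - eⱼ)* (eᵢ - eⱼ) ≥ 2`, valid since `∑ eᵢ = 1`. By orthogonality
`eᵢ* s = eᵢ* eᵢ = s eᵢ`, i.e. each `eᵢ` is self-adjoint for the form given by `s`; conjugating by
`r = s^{1/2}` turns this into genuine self-adjointness of `pᵢ = r eᵢ r⁻¹`. All the remaining claims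
are similarity-invariant identities that hold for `b` and the `eᵢ`.
-/

/-- The Cauchy–Schwarz estimate behind the invertibility of `∑ eᵢ* eᵢ`. -/
lemma two_le_of_sum_eq_one {A : Type*} [CStarAlgebra A] [PartialOrder A] [StarOrderedRing A]
    {n : ℕ} (e : Fin n → A) (he_sum : ∑ i, e i = 1) :
    (2 : A) ≤ (2 * n : ℕ) • ∑ i, star (e i) * e i := by
  have hstar : ∑ i, star (e i) = 1 := by rw [← star_sum, he_sum, star_one]
  have hnonneg : 0 ≤ ∑ i, ∑ j, star (e i - e j) * (e i - e j) :=
    Finset.sum_nonneg fun i _ => Finset.sum_nonneg fun j _ => star_mul_self_nonneg _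
  have hexp : ∑ i, ∑ j, star (e i - e j) * (e i - e j)
      = (2 * n : ℕ) • (∑ i, star (e i) * e i) - 2 := by
    simp only [star_sub, sub_mul, mul_sub, Finset.sum_sub_distrib, ← Finset.mul_sum,
      ← Finset.sum_mul, he_sum, hstar, Finset.sum_const, Finset.card_univ, Fintype.card_fin,
      mul_one, one_mul, mul_smul_comm, ← Finset.smul_sum]
    rw [mul_smul, two_smul, ← one_add_one_eq_two]
    abel
  rw [hexp] at hnonneg
  exact sub_nonneg.mp hnonneg

/-- If `∑ eᵢ = 1` then `∑ eᵢ* eᵢ` is invertible; for `n = 0` the algebra is trivial. -/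
lemma isUnit_sum_star_mul_self {A : Type*} [CStarAlgebra A] [PartialOrder A] [StarOrderedRing A]
    {n : ℕ} (e : Fin n → A) (he_sum : ∑ i, e i = 1) :
    IsUnit (∑ i, star (e i) * e i) := by
  have h2 : IsStrictlyPositive (2 : A) := by
    refine ⟨by simp, ?_⟩
    exact map_ofNat (algebraMap ℂ A) 2 ▸ (IsUnit.mk0 (2 : ℂ) two_ne_zero).map (algebraMap ℂ A)
  have hu := CStarAlgebra.isUnit_of_le (2 : A) (two_le_of_sum_eq_one e he_sum) h2
  rw [nsmul_eq_mul] at hu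
  exact ((Nat.cast_commute _ _).isUnit_mul_iff.mp hu).2

open Polynomial in
/-- Let `A` be a unital C*-algebra and `b ∈ A` algebraic with minimal
polynomial `p(t) = (t−λ₁)^{k₁}⋯(t−λₙ)^{kₙ}` with distinct roots, and let `e₁, …, eₙ` be
the spectral idempotents of `b`. Then (a) `s = ∑ eᵢ* eᵢ` is positive and invertible (so
its positive square root `r = s^{1/2}` is invertible, with inverse `r' = s^{-1/2}`);
(b) the elements `pᵢ = s^{1/2} eᵢ s^{-1/2}` are projections with `∑ pᵢ = 1`; and
(c) with `c = s^{1/2} b s^{-1/2}` one has `pᵢ (c−λᵢ)^{kᵢ} pᵢ = 0` for each `i` and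
`∑ pᵢ c pᵢ = c`. -/
theorem stmt_14 {A : Type*} [CStarAlgebra A] [PartialOrder A] [StarOrderedRing A]
    (n : ℕ) (lam : Fin n → ℂ) (hlam : Function.Injective lam)
    (k : Fin n → ℕ) (hk : ∀ i, 1 ≤ k i)
    (b : A)
    (hb : Polynomial.aeval b (∏ i, (X - Polynomial.C (lam i)) ^ k i) = 0)
    (hb_min : ∀ g : ℂ[X], g ≠ 0 →
      g.degree < (∏ i, (X - Polynomial.C (lam i)) ^ k i : ℂ[X]).degree →
      Polynomial.aeval b g ≠ 0)
    (e : Fin n → A)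
    (he_idem : ∀ i, e i * e i = e i)
    (he_orth : ∀ i j, i ≠ j → e i * e j = 0)
    (he_sum : ∑ i, e i = 1)
    (he_comm : ∀ i, b * e i = e i * b)
    (he_ann : ∀ i, (b - lam i • 1) ^ k i * e i = 0)
    (s r r' : A) (hs : s = ∑ i, star (e i) * e i)
    (hr : r = CFC.sqrt s) (hr' : r' = Ring.inverse r)
    (c : A) (hc : c = r * b * r')
    (p : Fin n → A) (hp : ∀ i, p i = r * e i * r') :
    (0 ≤ s ∧ IsUnit s ∧ IsUnit r) ∧
    ((∀ i, IsSelfAdjoint (p i) ∧ IsIdempotentElem (p i)) ∧ ∑ i, p i = 1) ∧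
    ((∀ i, p i * (c - lam i • 1) ^ k i * p i = 0) ∧ ∑ i, p i * c * p i = c) := by
  have hs0 : 0 ≤ s := hs ▸ Finset.sum_nonneg fun i _ => star_mul_self_nonneg _
  have hsu : IsUnit s := hs ▸ isUnit_sum_star_mul_self e he_sum
  have hrr : r * r = s := by rw [hr]; exact CFC.sqrt_mul_sqrt_self s hs0
  have hru : IsUnit r := ((Commute.refl r).isUnit_mul_iff.mp (hrr ▸ hsu)).1
  have hrs : star r = r := by rw [hr]; exact (CFC.sqrt_nonneg s).isSelfAdjoint
  have h1 : r * r' = 1 := by rw [hr']; exact Ring.mul_inverse_cancel r hru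
  have h2 : r' * r = 1 := by rw [hr']; exact Ring.inverse_mul_cancel r hru
  have hrstar : star r' = r' := by
    refine left_inv_eq_right_inv (a := r) ?_ h1
    simpa [hrs] using congrArg star h1
  have hse : ∀ i, s * e i = star (e i) * e i := by
    intro i
    rw [hs, Finset.sum_mul, Finset.sum_eq_single i]
    · rw [mul_assoc, he_idem]
    · intro j _ hj
      rw [mul_assoc, he_orth j i hj, mul_zero]
    · simp
  have hes : ∀ i, star (e i) * s = s * e i := by
    intro i
    have := congrArg star (hse i)
    rw [star_mul, hs0.isSelfAdjoint.star_eq, star_mul, star_star] at this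
    rw [this, hse]
  -- Conjugation by `r` is multiplicative.
  have hconj : ∀ x y : A, (r * x * r') * (r * y * r') = r * (x * y) * r' := by
    intro x y
    calc (r * x * r') * (r * y * r') = r * x * (r' * r) * y * r' := by noncomm_ring
      _ = r * (x * y) * r' := by rw [h2]; noncomm_ring
  have hpow : ∀ (x : A) (m : ℕ), (r * x * r') ^ m = r * x ^ m * r' := by
    intro x m
    induction m with
    | zero => simp [h1]
    | succ m ih => rw [pow_succ, ih, hconj, pow_succ]
  refine ⟨⟨hs0, hsu, hru⟩, ⟨fun i => ⟨?_, ?_⟩, ?_⟩, fun i => ?_, ?_⟩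
  · rw [IsSelfAdjoint, hp, star_mul, star_mul, hrs, hrstar]
    calc r' * (star (e i) * r) = r' * (star (e i) * r) * (r * r') := by rw [h1, mul_one]
      _ = r' * (star (e i) * (r * r)) * r' := by noncomm_ring
      _ = (r' * r) * r * e i * r' := by rw [hrr, hes, ← hrr]; noncomm_ring
      _ = r * e i * r' := by rw [h2, one_mul]
  · rw [IsIdempotentElem, hp, hconj, he_idem]
  · simp_rw [hp]
    rw [← Finset.sum_mul, ← Finset.mul_sum, he_sum, mul_one, h1]
  · have hcl : c - lam i • 1 = r * (b - lam i • 1) * r' := by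
      rw [hc, mul_sub, sub_mul, mul_smul_comm, mul_one, smul_mul_assoc, h1]
    rw [hcl, hpow, hp, hconj, hconj, mul_assoc (e i), he_ann, mul_zero, mul_zero, zero_mul]
  · have hterm : ∀ i, p i * c * p i = r * (b * e i) * r' := by
      intro i
      rw [hp, hc, hconj, hconj, ← he_comm, mul_assoc b, he_idem]
    simp_rw [hterm]
    rw [← Finset.sum_mul, ← Finset.mul_sum, ← Finset.mul_sum, he_sum, mul_one, hc]
end
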